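/- Let 0 < p ≤ 1 and δ > n/p − (n+1)/2. Then there exists a constant C > 0, independent of f, such that for every f in the (unweighted) weak Hardy space WH^p(R^n) one has ‖T^δ_* f‖_{WL^p} ≤ C ‖f‖_{WH^p}, i.e. sup_{λ>0} λ^p · |{x ∈ R^n : T^δ_* f(x) > λ}| ≤ C^p ‖f‖_{WH^p}^p, where |·| denotes Lebesgue measure. -/

import Mathlib

/-!
The proof compares the Bochner–Riesz means pointwise with averages of a power of the grand maximal
function `G`. Put `M = δ + (n+1)/2`; the hypothesis says `M > n/p`, and `p ≤ 1` gives `M > n`.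

*Kernel.* The kernel `K = brKernel n δ` is radial, so its size is found on a coordinate axis, where
integrating out the other variables leaves the Fourier integral of `(1 - s²)₊^(δ+(n-1)/2)`. Moving
the contour into the upper half plane gives `|K(x)| ≲ (1+|x|)^(-M)` (`brKernel_decay`). As the
multiplier has compact support, `K = K * Φ` for a Schwartz function `Φ`, hence all derivatives of
`K` decay at the same rate (`brKernel_iteratedFDeriv_decay`).

*Decomposition.* A smooth partition of unity adapted to `ℤⁿ` cuts `K` into bumps. The bump near
`R (x - z)`, recentred at `z`, is `O((1 + R|x-z|)^(-M))` times a function of the test class, for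
every `z` in a cell of volume about `R⁻ⁿ` (`piece_test`, `piece_bound`). Averaging over the cells,
and using `(∑ a)^r ≤ ∑ a^r` for `r ≤ 1`, yields (`brOp_le_average`)
`|T_R f(x)|^r ≲ Rⁿ ∫ (1 + R|x-z|)^(-rM) G(z)^r dz`.

*Weak type.* Choose `n/M < r < p`. Since `r < p`, at each height `λ` one has
`G^r ≤ (4λ)^r (1 + h)` with `∫ h ≲ (‖G‖_{WL^p}/λ)^p` (`exists_majorant`). Outside the set where some
average of `h` over a centred ball exceeds `1`, the right-hand side above is `≲ λ^r`, as `rM > n`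
(`average_bound`); that exceptional set has measure `≲ ∫ h` by the Vitali covering lemma
(`volume_badSet_le`). Dimension zero, where the space is a point, is treated separately.
-/

open MeasureTheory Real Complex Set
open scoped ENNReal NNReal FourierTransform

noncomputable section

/-- Euclidean space `ℝⁿ`. -/
abbrev Euc (n : ℕ) := EuclideanSpace ℝ (Fin n)

/-- The axis-parallel closed cube centered at `x₀` with side length `r`. -/
def cube {n : ℕ} (x₀ : Euc n) (r : ℝ) : Set (Euc n) :=
  {y | ∀ i, |y i - x₀ i| ≤ r / 2}

/-- The weighted measure `w(E) = ∫_E w(x) dx`. -/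
def wMeasure {n : ℕ} (w : Euc n → ℝ) : Measure (Euc n) :=
  (volume : Measure (Euc n)).withDensity fun x => ENNReal.ofReal (w x)

/-- The Muckenhoupt class `A₁`: `w` is nonnegative, locally integrable, and the average of `w`
over any cube is dominated by a constant times the essential infimum of `w` over that cube. -/
def IsA1 {n : ℕ} (w : Euc n → ℝ) : Prop :=
  (∀ x, 0 ≤ w x) ∧ LocallyIntegrable w volume ∧
    ∃ C : ℝ, 0 < C ∧ ∀ (x₀ : Euc n) (r : ℝ), 0 < r →
      (∫ x in cube x₀ r, w x) / r ^ n ≤ C * essInf w (volume.restrict (cube x₀ r))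

/-- The Muckenhoupt class `A_q`, `1 < q < ∞`. -/
def IsAq {n : ℕ} (w : Euc n → ℝ) (q : ℝ) : Prop :=
  (∀ x, 0 ≤ w x) ∧ LocallyIntegrable w volume ∧
    ∃ C : ℝ, 0 < C ∧ ∀ (x₀ : Euc n) (r : ℝ), 0 < r →
      ((∫ x in cube x₀ r, w x) / r ^ n) *
        ((∫ x in cube x₀ r, w x ^ (-1 / (q - 1))) / r ^ n) ^ (q - 1) ≤ C

/-- The critical index `q_w = inf {q > 1 : w ∈ A_q}` of a weight `w`. -/
def criticalIndex {n : ℕ} (w : Euc n → ℝ) : ℝ :=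
  sInf {q : ℝ | 1 < q ∧ IsAq w q}

/-- The `L¹`-dilation `g_t(x) = t⁻ⁿ g(x / t)`. -/
def dil {n : ℕ} (g : Euc n → ℂ) (t : ℝ) (x : Euc n) : ℂ :=
  ((t ^ n)⁻¹ : ℝ) • g ((t⁻¹ : ℝ) • x)

/-- The Bochner-Riesz kernel `φ` of order `δ`, i.e. the inverse Fourier transform of
`ξ ↦ (1 - |ξ|²)₊^δ`. -/
def brKernel (n : ℕ) (δ : ℝ) : Euc n → ℂ :=
  𝓕⁻ fun ξ : Euc n => (Complex.ofReal (((1 - ‖ξ‖ ^ 2) ⊔ 0) ^ δ))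

/-- The Bochner-Riesz operator `T^δ_R f = φ_{1/R} * f` of order `δ`. -/
def brOp (n : ℕ) (δ R : ℝ) (f : Euc n → ℂ) (x : Euc n) : ℂ :=
  ∫ y, dil (brKernel n δ) R⁻¹ (x - y) * f y

/-- The maximal Bochner-Riesz operator `T^δ_* f(x) = sup_{R > 0} |T^δ_R f(x)|`. -/
def maxBR (n : ℕ) (δ : ℝ) (f : Euc n → ℂ) (x : Euc n) : ℝ≥0∞ :=
  ⨆ (R : ℝ) (_ : 0 < R), (‖brOp n δ R f x‖₊ : ℝ≥0∞)

/-- Partial derivative in the `i`-th coordinate direction. -/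
def pderiv' {n : ℕ} (i : Fin n) (f : Euc n → ℂ) : Euc n → ℂ :=
  fun x => fderiv ℝ f x (EuclideanSpace.single i 1)

/-- The multi-index partial derivative `D^α f`. -/
def mderiv {n : ℕ} (α : Fin n → ℕ) (f : Euc n → ℂ) : Euc n → ℂ :=
  (((List.finRange n).map fun i => (pderiv' i)^[α i]).foldr (· ∘ ·) id) f

/-- The test function class
`𝒜_N = {φ ∈ 𝒮 : sup_x sup_{|α| ≤ N+1} (1+|x|)^{N+n+1} |D^α φ(x)| ≤ 1}`. -/
def inTestClass {n : ℕ} (N : ℕ) (φ : SchwartzMap (Euc n) ℂ) : Prop :=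
  ∀ (x : Euc n) (α : Fin n → ℕ), (∑ i, α i) ≤ N + 1 →
    (1 + ‖x‖) ^ (N + n + 1) * ‖mderiv α (⇑φ) x‖ ≤ 1

/-- The radial grand maximal function
`G⁺ f(x) = sup_{φ ∈ 𝒜_N} sup_{t > 0} |(φ_t * f)(x)|`. -/
def grandMax {n : ℕ} (N : ℕ) (f : Euc n → ℂ) (x : Euc n) : ℝ≥0∞ :=
  ⨆ (φ : SchwartzMap (Euc n) ℂ) (_ : inTestClass N φ) (t : ℝ) (_ : 0 < t),
    (‖∫ y, dil (⇑φ) t (x - y) * f y‖₊ : ℝ≥0∞)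

/-- The weak `L^p` quasinorm `sup_{λ > 0} λ · μ({x : g(x) > λ})^{1/p}` of an
`ℝ≥0∞`-valued function with respect to the measure `μ`. -/
def weakNorm {n : ℕ} (μ : Measure (Euc n)) (p : ℝ) (g : Euc n → ℝ≥0∞) : ℝ≥0∞ :=
  ⨆ (lam : ℝ≥0) (_ : 0 < lam), (lam : ℝ≥0∞) * μ {x | (lam : ℝ≥0∞) < g x} ^ (1 / p)

/-- The weak Hardy space quasinorm `‖f‖_{WH^p_w} = ‖G⁺ f‖_{WL^p_w}`, with grand maximal
function taken over the test class `𝒜_N`. -/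
def whNorm {n : ℕ} (N : ℕ) (μ : Measure (Euc n)) (p : ℝ) (f : Euc n → ℂ) : ℝ≥0∞ :=
  weakNorm μ p (grandMax N f)

/-- The Hardy-Littlewood maximal function (over cubes containing `x`). -/
def hlMax {n : ℕ} (f : Euc n → ℂ) (x : Euc n) : ℝ≥0∞ :=
  ⨆ (x₀ : Euc n) (r : ℝ) (_ : 0 < r) (_ : x ∈ cube x₀ r),
    (volume (cube x₀ r))⁻¹ * ∫⁻ y in cube x₀ r, (‖f y‖₊ : ℝ≥0∞)

open scoped SchwartzMap

/-! ### One-dimensional oscillatory integral -/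

/-- The vertical sides of the contour contribute at most an incomplete Gamma integral. -/
theorem norm_one_dim_side {a t : ℝ} (ha : 0 < a) (ht : 0 < t) :
    ∫ y in (0:ℝ)..1, y ^ a * Real.exp (-(2 * π * t) * y) ≤
      (1 / (2 * π)) ^ (a + 1) * Real.Gamma (a + 1) * t ^ (-(a + 1)) := by
  have h2 : (0:ℝ) < 2 * π * t := by positivity
  have hFint : IntegrableOn (fun y : ℝ => y ^ a * Real.exp (-(2 * π * t) * y)) (Ioi 0) := by
    have := integrableOn_rpow_mul_exp_neg_mul_rpow (p := 1) (s := a) (b := 2 * π * t)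
      (by linarith) (by norm_num) h2
    simpa using this
  have e := Real.integral_rpow_mul_exp_neg_mul_Ioi (a := a + 1) (r := 2 * π * t)
    (by linarith) h2
  simp only [add_sub_cancel_right] at e
  rw [intervalIntegral.integral_of_le zero_le_one]
  calc ∫ y in Ioc (0:ℝ) 1, y ^ a * Real.exp (-(2 * π * t) * y)
      ≤ ∫ y in Ioi (0:ℝ), y ^ a * Real.exp (-(2 * π * t) * y) := by
        refine setIntegral_mono_set hFint ?_ (Ioc_subset_Ioi_self.eventuallyLE)
        refine (ae_restrict_iff' measurableSet_Ioi).2 (Filter.Eventually.of_forall fun y hy => ?_)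
        have : 0 < y := hy
        positivity
    _ = (1 / (2 * π)) ^ (a + 1) * Real.Gamma (a + 1) * t ^ (-(a + 1)) := by
        simp only [neg_mul]
        rw [e, Real.rpow_neg ht.le, one_div, mul_inv, Real.mul_rpow (by positivity) (by positivity),
          ← Real.inv_rpow ht.le]
        ring_nf

theorem exp_neg_le_rpow {b t : ℝ} (hb : 0 < b) (ht : 0 < t) :
    Real.exp (-(2 * π * t)) ≤ b ^ b * t ^ (-b) := by
  have h1 : t / b ≤ Real.exp (t / b) := by linarith [Real.add_one_le_exp (t / b)]
  have h2 : (t / b) ^ b ≤ Real.exp t := by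
    calc (t / b) ^ b ≤ (Real.exp (t / b)) ^ b := Real.rpow_le_rpow (by positivity) h1 hb.le
      _ = Real.exp t := by rw [← Real.exp_mul]; congr 1; field_simp
  have h3 : Real.exp (-(2 * π * t)) ≤ Real.exp (-t) := by
    apply Real.exp_le_exp.2; nlinarith [Real.pi_gt_three]
  refine h3.trans ?_
  rw [Real.exp_neg, Real.rpow_neg ht.le]
  rw [Real.div_rpow ht.le hb.le, div_le_iff₀ (by positivity)] at h2
  rw [inv_le_iff_one_le_mul₀ (by positivity)]
  have : 0 < t ^ b := by positivity
  calc (1:ℝ) = t ^ b * (t ^ b)⁻¹ := by field_simp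
    _ ≤ (Real.exp t * b ^ b) * (t ^ b)⁻¹ := by gcongr
    _ = _ := by ring

/-- Decay of the Fourier transform of `(1 - s²)₊^a`. The segment `[-1, 1]` is replaced by the other
three sides of the rectangle with corners `-1` and `1 + i`, on which the exponential is small. -/
theorem one_dim_decay {a : ℝ} (ha : 0 < a) : ∃ C : ℝ, 0 ≤ C ∧ ∀ t : ℝ, 0 < t →
    ‖∫ s in (-1:ℝ)..1, (((1 - s ^ 2) ^ a : ℝ) : ℂ) * cexp (2 * π * I * t * s)‖ ≤
      C * t ^ (-(a + 1)) := by
  set B := (1 / (2 * π)) ^ (a + 1) * Real.Gamma (a + 1) with hB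
  have hΓ : 0 < Real.Gamma (a + 1) := Real.Gamma_pos_of_pos (by linarith)
  refine ⟨2 * (3 ^ a * 3 ^ a) * ((a + 1) ^ (a + 1)) + 3 ^ a * B + 3 ^ a * B, by positivity,
    fun t ht => ?_⟩
  set F : ℂ → ℂ := fun z => (1 - z) ^ (a : ℂ) * (1 + z) ^ (a : ℂ) * cexp (2 * π * I * t * z)
    with hF
  have hcp : ∀ w : ℂ, (0 ≤ w.re) → ContinuousAt (fun z : ℂ => z ^ (a : ℂ)) w := by
    intro w hw
    by_cases h0 : w = 0
    · subst h0
      have := Complex.continuousAt_cpow_zero_of_re_pos (z := (a : ℂ)) (by simpa using ha)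
      exact this.comp₂ continuousAt_id continuousAt_const
    · refine continuousAt_cpow_const ?_
      rcases hw.lt_or_eq with h | h
      · exact Or.inl h
      · exact Or.inr fun h' => h0 (Complex.ext h.symm h')
  have hFn : ∀ z : ℂ, ‖F z‖ = ‖1 - z‖ ^ a * ‖1 + z‖ ^ a * Real.exp (-(2 * π * t) * z.im) := by
    intro z
    simp only [hF, norm_mul, Complex.norm_cpow_real, Complex.norm_exp]
    congr 2
    simp
  have key := Complex.integral_boundary_rect_eq_zero_of_continuousOn_of_differentiableOn F
    (-1) (1 + I) ?_ ?_
  · simp only [Complex.add_re, Complex.neg_re, Complex.one_re, Complex.I_re, Complex.add_im,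
      Complex.neg_im, Complex.one_im, Complex.I_im, smul_eq_mul, neg_zero, add_zero, zero_add,
      Complex.ofReal_zero, zero_mul, Complex.ofReal_one, one_mul, Complex.ofReal_neg] at key
    have e0 : ∫ s in (-1:ℝ)..1, (((1 - s ^ 2) ^ a : ℝ) : ℂ) * cexp (2 * π * I * t * s)
        = ∫ s in (-1:ℝ)..1, F s := by
      refine intervalIntegral.integral_congr fun s hs => ?_
      rw [uIcc_of_le (by norm_num)] at hs
      have h1 : 0 ≤ 1 - s := by linarith [hs.2]
      have h2 : 0 ≤ 1 + s := by linarith [hs.1]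
      simp only [hF]
      rw [show (1 : ℝ) - s ^ 2 = (1 - s) * (1 + s) by ring, Real.mul_rpow h1 h2]
      push_cast [Complex.ofReal_cpow h1, Complex.ofReal_cpow h2]
      rfl
    have bt : ‖∫ x in (-1:ℝ)..1, F (x + I)‖ ≤
        2 * (3 ^ a * 3 ^ a) * ((a + 1) ^ (a + 1)) * t ^ (-(a + 1)) := by
      have : ‖∫ x in (-1:ℝ)..1, F (x + I)‖ ≤
          (3 ^ a * 3 ^ a * ((a + 1) ^ (a + 1) * t ^ (-(a + 1)))) * |(1:ℝ) - (-1)| := by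
        refine intervalIntegral.norm_integral_le_of_norm_le_const fun x hx => ?_
        rw [uIoc_of_le (by norm_num)] at hx
        rw [hFn]
        have e1 : ‖1 - ((x:ℂ) + I)‖ ≤ 3 := by
          calc ‖1 - ((x:ℂ) + I)‖ = ‖((1 - x : ℝ) : ℂ) - I‖ := by push_cast; ring_nf
            _ ≤ ‖((1 - x : ℝ) : ℂ)‖ + ‖I‖ := norm_sub_le _ _
            _ ≤ 3 := by
              rw [Complex.norm_real, Complex.norm_I, Real.norm_eq_abs, abs_of_nonneg] <;>
                linarith [hx.1, hx.2]
        have e2 : ‖1 + ((x:ℂ) + I)‖ ≤ 3 := by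
          calc ‖1 + ((x:ℂ) + I)‖ = ‖((1 + x : ℝ) : ℂ) + I‖ := by push_cast; ring_nf
            _ ≤ ‖((1 + x : ℝ) : ℂ)‖ + ‖I‖ := norm_add_le _ _
            _ ≤ 3 := by
              rw [Complex.norm_real, Complex.norm_I, Real.norm_eq_abs, abs_of_nonneg] <;>
                linarith [hx.1, hx.2]
        have e3 := exp_neg_le_rpow (b := a + 1) (by linarith) ht
        simp only [Complex.add_im, Complex.ofReal_im, Complex.I_im, zero_add, mul_one]
        gcongr
      refine this.trans (le_of_eq ?_)
      norm_num; ring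
    have bs : ∀ G : ℝ → ℂ, (∀ y ∈ Ioc (0:ℝ) 1, ‖G y‖ ≤ y ^ a * 3 ^ a *
        Real.exp (-(2 * π * t) * y)) → ‖I * ∫ y in (0:ℝ)..1, G y‖ ≤
        3 ^ a * B * t ^ (-(a + 1)) := by
      intro G hG
      rw [norm_mul, Complex.norm_I, one_mul]
      have hi : IntervalIntegrable (fun y : ℝ => y ^ a * 3 ^ a *
        Real.exp (-(2 * π * t) * y)) volume 0 1 := by
        apply Continuous.intervalIntegrable
        have : Continuous fun y : ℝ => y ^ a := Real.continuous_rpow_const ha.le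
        fun_prop
      refine (intervalIntegral.norm_integral_le_of_norm_le zero_le_one
        (Filter.Eventually.of_forall hG) hi).trans ?_
      have := norm_one_dim_side ha ht
      calc _ = 3 ^ a * ∫ y in (0:ℝ)..1, y ^ a * Real.exp (-(2 * π * t) * y) := by
            rw [← intervalIntegral.integral_const_mul]; congr 1; ext y; ring
        _ ≤ 3 ^ a * (B * t ^ (-(a + 1))) := by gcongr
        _ = _ := by ring
    have h2y : ∀ y ∈ Ioc (0:ℝ) 1, ‖(2:ℂ) + y * I‖ ≤ 3 ∧ ‖(2:ℂ) - y * I‖ ≤ 3 := by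
      intro y hy
      have : ‖(y:ℂ) * I‖ ≤ 1 := by
        rw [norm_mul, Complex.norm_I, mul_one, Complex.norm_real, Real.norm_eq_abs,
          abs_of_pos hy.1]; exact hy.2
      constructor
      · refine (norm_add_le _ _).trans ?_
        have : ‖(2:ℂ)‖ = 2 := by simp
        linarith
      · refine (norm_sub_le _ _).trans ?_
        have : ‖(2:ℂ)‖ = 2 := by simp
        linarith
    have hyn : ∀ y ∈ Ioc (0:ℝ) 1, ‖(y:ℂ) * I‖ = y := by
      intro y hy
      rw [norm_mul, Complex.norm_I, mul_one, Complex.norm_real, Real.norm_eq_abs, abs_of_pos hy.1]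
    have br := bs (fun y => F (1 + y * I)) (by
      intro y hy
      rw [hFn]
      have e1 : ‖1 - (1 + (y:ℂ) * I)‖ = y := by
        rw [show 1 - (1 + (y:ℂ) * I) = -((y:ℂ) * I) by ring, norm_neg, hyn y hy]
      have e2 : ‖1 + (1 + (y:ℂ) * I)‖ ≤ 3 := by
        refine le_trans (le_of_eq ?_) (h2y y hy).1; ring_nf
      have e3 : (1 + (y:ℂ) * I).im = y := by simp
      have := hy.1
      rw [e1, e3]
      gcongr)
    have bl := bs (fun y => F (-1 + y * I)) (by
      intro y hy
      rw [hFn]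
      have e1 : ‖1 + (-1 + (y:ℂ) * I)‖ = y := by
        rw [show 1 + (-1 + (y:ℂ) * I) = (y:ℂ) * I by ring, hyn y hy]
      have e2 : ‖1 - (-1 + (y:ℂ) * I)‖ ≤ 3 := by
        refine le_trans (le_of_eq ?_) (h2y y hy).2; ring_nf
      have e3 : (-1 + (y:ℂ) * I).im = y := by simp
      have := hy.1
      rw [e1, e3, mul_comm (y ^ a)]
      gcongr)
    have e : ∫ s in (-1:ℝ)..1, F s = (∫ x in (-1:ℝ)..1, F (x + I)) -
        I * (∫ y in (0:ℝ)..1, F (1 + y * I)) + I * ∫ y in (0:ℝ)..1, F (-1 + y * I) := by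
      linear_combination key
    rw [e0, e]
    refine (norm_add_le _ _).trans ?_
    have := norm_sub_le (∫ x in (-1:ℝ)..1, F (x + I)) (I * (∫ y in (0:ℝ)..1, F (1 + y * I)))
    linarith
  · intro z hz
    refine ContinuousAt.continuousWithinAt ?_
    have hz1 : z.re ∈ Icc (-1:ℝ) 1 := by
      have := hz.1; simpa [uIcc_of_le] using this
    refine ((ContinuousAt.comp (f := fun z => 1 - z) (g := fun w : ℂ => w ^ (a:ℂ))
      (hcp _ ?_) (by fun_prop)).mul (ContinuousAt.comp (f := fun z => 1 + z)
      (g := fun w : ℂ => w ^ (a:ℂ)) (hcp _ ?_) (by fun_prop))).mul (by fun_prop)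
    · simp; exact hz1.2
    · simp; linarith [hz1.1]
  · intro z hz
    have hz1 : z.re ∈ Ioo (-1:ℝ) 1 := by
      have := hz.1; simpa using this
    refine DifferentiableAt.differentiableWithinAt ?_
    refine ((DifferentiableAt.cpow_const (by fun_prop) ?_).mul
      (DifferentiableAt.cpow_const (by fun_prop) ?_)).mul (by fun_prop)
    · left; simp; exact hz1.2
    · left; simp; linarith [hz1.1]

/-! ### Size of the Bochner–Riesz kernel -/

/-- The Bochner–Riesz multiplier. -/
def brMult (n : ℕ) (δ : ℝ) (ξ : Euc n) : ℂ := Complex.ofReal (((1 - ‖ξ‖ ^ 2) ⊔ 0) ^ δ)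

theorem brKernel_eq (n : ℕ) (δ : ℝ) : brKernel n δ = 𝓕⁻ (brMult n δ) := rfl

theorem brMult_continuous {n : ℕ} {δ : ℝ} (hδ : 0 < δ) : Continuous (brMult n δ) := by
  have : Continuous fun y : ℝ => y ^ δ := Real.continuous_rpow_const hδ.le
  unfold brMult
  fun_prop

theorem brMult_eq_zero {n : ℕ} {δ : ℝ} (hδ : 0 < δ) {ξ : Euc n} (h : 1 ≤ ‖ξ‖) :
    brMult n δ ξ = 0 := by
  have : (1 - ‖ξ‖ ^ 2) ⊔ 0 = 0 := max_eq_right (by nlinarith)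
  simp [brMult, this, Real.zero_rpow hδ.ne']

theorem brMult_hasCompactSupport {n : ℕ} {δ : ℝ} (hδ : 0 < δ) :
    HasCompactSupport (brMult n δ) := by
  refine HasCompactSupport.intro (isCompact_closedBall (0 : Euc n) 1) fun ξ hξ => ?_
  refine brMult_eq_zero hδ ?_
  simp at hξ
  exact hξ.le

theorem brMult_integrable {n : ℕ} {δ : ℝ} (hδ : 0 < δ) : Integrable (brMult n δ) :=
  (brMult_continuous hδ).integrable_of_hasCompactSupport (brMult_hasCompactSupport hδ)

/-- The kernel is invariant under the reflection exchanging two points of equal norm. -/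
theorem brKernel_radial {n : ℕ} {δ : ℝ} {x y : Euc n} (h : ‖x‖ = ‖y‖) :
    brKernel n δ x = brKernel n δ y := by
  set U := (ℝ ∙ (x - y))ᗮ.reflection
  have hU : U x = y := Submodule.reflection_sub h
  have e : brMult n δ ∘ U = brMult n δ := by
    ext ξ; simp [brMult]
  rw [← hU, brKernel_eq, ← Real.fourierInv_comp_linearIsometry, e]

theorem brKernel_bounded {n : ℕ} {δ : ℝ} :
    ∃ C : ℝ, 0 ≤ C ∧ ∀ x, ‖brKernel n δ x‖ ≤ C := by
  refine ⟨∫ ξ, ‖brMult n δ ξ‖, by positivity, fun x => ?_⟩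
  rw [brKernel_eq, Real.fourierInv_eq]
  refine (norm_integral_le_integral_norm _).trans (le_of_eq ?_)
  simp

/-- Integrating `(b - |v|²)₊^δ` over `ℝᵏ` produces `(b₊)^(δ + k/2)`, by scaling. -/
theorem integral_slice (k : ℕ) {δ : ℝ} (hδ : 0 < δ) (b : ℝ) :
    ∫ v : Fin k → ℝ, ((b - ∑ i, v i ^ 2) ⊔ 0) ^ δ =
      (b ⊔ 0) ^ (δ + k / 2) * ∫ v : Fin k → ℝ, ((1 - ∑ i, v i ^ 2) ⊔ 0) ^ δ := by
  rcases le_or_gt b 0 with hb | hb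
  · have h0 : ∀ v : Fin k → ℝ, ((b - ∑ i, v i ^ 2) ⊔ 0) = 0 := fun v =>
      max_eq_right (by have : 0 ≤ ∑ i, v i ^ 2 := by positivity
                       linarith)
    simp only [h0, max_eq_right hb]
    rw [Real.zero_rpow hδ.ne', Real.zero_rpow (by positivity)]
    simp
  · have hs : 0 < √b := Real.sqrt_pos.2 hb
    have h := Measure.integral_comp_smul_of_nonneg (volume : Measure (Fin k → ℝ))
      (fun v : Fin k → ℝ => ((b - ∑ i, v i ^ 2) ⊔ 0) ^ δ) (√b) (hR := hs.le)
    have e : ∀ v : Fin k → ℝ, ((b - ∑ i, (√b • v) i ^ 2) ⊔ 0) ^ δ =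
        b ^ δ * ((1 - ∑ i, v i ^ 2) ⊔ 0) ^ δ := by
      intro v
      rw [← Real.mul_rpow hb.le (le_max_right _ _)]
      congr 1
      rw [mul_max_of_nonneg _ _ hb.le]
      simp only [Pi.smul_apply, smul_eq_mul, mul_pow, Real.sq_sqrt hb.le, ← Finset.mul_sum]
      ring_nf
    simp only [e, integral_const_mul, Module.finrank_fin_fun, smul_eq_mul] at h
    rw [max_eq_left hb.le, Real.rpow_add hb, show (k:ℝ) / 2 = (1/2) * k by ring,
      Real.rpow_mul hb.le, ← Real.sqrt_eq_rpow, Real.rpow_natCast]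
    have hk : 0 < √b ^ k := by positivity
    field_simp at h
    linarith

/-- The `(k+1)`-dimensional kernel on the first axis is a one-dimensional Fourier integral. -/
theorem brKernel_axis (k : ℕ) {δ : ℝ} (hδ : 0 < δ) (t : ℝ) :
    brKernel (k + 1) δ (EuclideanSpace.single 0 t) =
      (∫ s in (-1:ℝ)..1, (((1 - s ^ 2) ^ (δ + k / 2) : ℝ) : ℂ) * cexp (2 * π * I * t * s)) *
        ((∫ v : Fin k → ℝ, ((1 - ∑ i, v i ^ 2) ⊔ 0) ^ δ : ℝ) : ℂ) := by
  set c := ∫ v : Fin k → ℝ, ((1 - ∑ i, v i ^ 2) ⊔ 0) ^ δ with hc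
  set Ψ : Euc (k + 1) → ℂ := fun ξ =>
    cexp (2 * π * I * t * ((ξ 0 : ℝ) : ℂ)) * brMult (k + 1) δ ξ with hΨ
  have hΨi : Integrable Ψ := by
    refine Continuous.integrable_of_hasCompactSupport ?_ ?_
    · have := brMult_continuous (n := k + 1) hδ
      fun_prop
    · exact (brMult_hasCompactSupport hδ).mul_left
  set E : ℝ × (Fin k → ℝ) → Euc (k + 1) := fun q =>
    WithLp.toLp 2 ((MeasurableEquiv.piFinSuccAbove (fun _ : Fin (k + 1) => ℝ) 0).symm q) with hE
  have mpE : MeasurePreserving E volume volume :=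
    (PiLp.volume_preserving_toLp (Fin (k + 1))).comp
      (volume_preserving_piFinSuccAbove (fun _ : Fin (k + 1) => ℝ) 0).symm
  have meE : MeasurableEmbedding E :=
    (MeasurableEquiv.toLp 2 (Fin (k + 1) → ℝ)).measurableEmbedding.comp
      (MeasurableEquiv.piFinSuccAbove (fun _ : Fin (k + 1) => ℝ) 0).symm.measurableEmbedding
  have hE0 : ∀ q, (E q) 0 = q.1 := fun q => by simp [hE, MeasurableEquiv.piFinSuccAbove]
  have hEn : ∀ q, ‖E q‖ ^ 2 = q.1 ^ 2 + ∑ i, q.2 i ^ 2 := fun q => by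
    rw [EuclideanSpace.real_norm_sq_eq, Fin.sum_univ_succ]
    simp [hE, MeasurableEquiv.piFinSuccAbove]
  have h1 : brKernel (k + 1) δ (EuclideanSpace.single 0 t) = ∫ ξ, Ψ ξ := by
    rw [brKernel_eq, Real.fourierInv_eq']
    congr 1; ext ξ
    simp only [hΨ, EuclideanSpace.inner_single_right, smul_eq_mul, conj_trivial]
    congr 2
    push_cast; ring
  have h2 : ∫ ξ, Ψ ξ = ∫ q, Ψ (E q) := (mpE.integral_comp meE Ψ).symm
  have h3 : Integrable (fun q => Ψ (E q)) (volume.prod volume) :=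
    (mpE.integrable_comp_emb meE).2 hΨi
  rw [h1, h2, Measure.volume_eq_prod, integral_prod _ h3]
  have h4 : ∀ s : ℝ, ∫ v : Fin k → ℝ, Ψ (E (s, v)) =
      ((((1 - s ^ 2) ⊔ 0) ^ (δ + k / 2) : ℝ) : ℂ) * cexp (2 * π * I * t * s) * (c : ℂ) := by
    intro s
    have : ∀ v : Fin k → ℝ, Ψ (E (s, v)) = cexp (2 * π * I * t * s) *
        (((((1 - s ^ 2) - ∑ i, v i ^ 2) ⊔ 0) ^ δ : ℝ) : ℂ) := by
      intro v
      simp only [hΨ, hE0, brMult, hEn]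
      rw [sub_sub]
    simp only [this]
    rw [integral_const_mul, integral_complex_ofReal, integral_slice k hδ]
    push_cast; ring
  simp only [h4]
  rw [integral_mul_const]
  congr 1
  rw [intervalIntegral.integral_of_le (by norm_num), ← integral_indicator measurableSet_Ioc]
  refine integral_congr_ae (Filter.Eventually.of_forall fun s => ?_)
  by_cases hs : s ∈ Ioc (-1:ℝ) 1
  · rw [indicator_of_mem hs]
    simp only
    rw [max_eq_left (by nlinarith [hs.1, hs.2])]
  · rw [indicator_of_notMem hs]
    simp only
    rw [max_eq_right, Real.zero_rpow (by positivity)]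
    · simp
    · rw [mem_Ioc, not_and_or] at hs
      rcases hs with h | h <;> nlinarith

/-- Size of the Bochner–Riesz kernel: the classical Bessel function asymptotics as an upper bound. -/
theorem brKernel_decay {n : ℕ} (hn : 0 < n) {δ : ℝ} (hδ : 0 < δ) :
    ∃ C : ℝ, 0 ≤ C ∧ ∀ x, ‖brKernel n δ x‖ ≤ C * (1 + ‖x‖) ^ (-(δ + (n + 1) / 2)) := by
  obtain ⟨k, rfl⟩ : ∃ k, n = k + 1 := ⟨n - 1, by omega⟩
  obtain ⟨C₀, hC₀, h₀⟩ := brKernel_bounded (n := k + 1) (δ := δ)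
  obtain ⟨C₁, hC₁, h₁⟩ := one_dim_decay (a := δ + k / 2) (by positivity)
  set c := ∫ v : Fin k → ℝ, ((1 - ∑ i, v i ^ 2) ⊔ 0) ^ δ with hc
  set M : ℝ := δ + ((k + 1 : ℕ) + 1) / 2 with hM
  have hM' : δ + k / 2 + 1 = M := by rw [hM]; push_cast; ring
  have hMp : 0 < M := by rw [← hM']; positivity
  rw [hM'] at h₁
  have h2M : ∀ t : ℝ, 0 < t → t ^ (-M) * 2 ^ (-M) = (2 * t) ^ (-M) := fun t ht => by
    rw [mul_comm, Real.mul_rpow (by norm_num) ht.le]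
  refine ⟨(C₀ + C₁ * |c|) * 2 ^ M, by positivity, fun x => ?_⟩
  rcases le_or_gt ‖x‖ 1 with hx | hx
  · have : (1:ℝ) ≤ 2 ^ M * (1 + ‖x‖) ^ (-M) := by
      rw [Real.rpow_neg (by positivity), ← div_eq_mul_inv, one_le_div (by positivity)]
      exact Real.rpow_le_rpow (by positivity) (by linarith) hMp.le
    calc _ ≤ C₀ * 1 := by rw [mul_one]; exact h₀ x
      _ ≤ (C₀ + C₁ * |c|) * (2 ^ M * (1 + ‖x‖) ^ (-M)) := by
        gcongr
        have : 0 ≤ C₁ * |c| := by positivity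
        linarith
      _ = _ := by ring
  · have hxp : 0 < ‖x‖ := by linarith
    rw [brKernel_radial (y := EuclideanSpace.single 0 ‖x‖) (by simp), brKernel_axis k hδ, norm_mul,
      Complex.norm_real, Real.norm_eq_abs]
    have e1 : ‖x‖ ^ (-M) ≤ 2 ^ M * (1 + ‖x‖) ^ (-M) := by
      rw [Real.rpow_neg hxp.le, Real.rpow_neg (by positivity), ← div_eq_mul_inv,
        le_div_iff₀ (by positivity), inv_mul_le_iff₀ (by positivity),
        ← Real.mul_rpow hxp.le (by norm_num)]
      exact Real.rpow_le_rpow (by positivity) (by linarith) hMp.le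
    calc _ ≤ C₁ * ‖x‖ ^ (-M) * |c| := by
          gcongr
          exact h₁ _ hxp
      _ = C₁ * |c| * ‖x‖ ^ (-M) := by ring
      _ ≤ (C₀ + C₁ * |c|) * (2 ^ M * (1 + ‖x‖) ^ (-M)) := by
        gcongr
        linarith
      _ = _ := by ring

/-! ### Decay of the derivatives of the kernel -/

theorem schwartz_rpow_decay {n : ℕ} {F : Type*} [NormedAddCommGroup F] [NormedSpace ℝ F]
    (Φ : 𝓢(Euc n, F)) (L : ℝ) : ∃ C : ℝ, 0 ≤ C ∧ ∀ x, ‖Φ x‖ ≤ C * (1 + ‖x‖) ^ (-L) := by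
  obtain ⟨k, hk⟩ := exists_nat_ge L
  have h := fun x => SchwartzMap.one_add_le_sup_seminorm_apply (𝕜 := ℝ) (m := (k, 0)) (k := k)
    (n := 0) le_rfl le_rfl Φ x
  set S := 2 ^ k * ((Finset.Iic (k, 0)).sup fun m : ℕ × ℕ => SchwartzMap.seminorm ℝ m.1 m.2) Φ
  refine ⟨S, by positivity, fun x => ?_⟩
  have hx := h x
  rw [norm_iteratedFDeriv_zero] at hx
  have h1 : (1:ℝ) ≤ 1 + ‖x‖ := by linarith [norm_nonneg x]
  rw [Real.rpow_neg (by positivity), ← div_eq_mul_inv, le_div_iff₀ (by positivity), mul_comm]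
  refine le_trans ?_ hx
  gcongr
  rw [← Real.rpow_natCast]
  exact Real.rpow_le_rpow_of_exponent_le h1 hk

theorem one_add_norm_le_mul {E : Type*} [NormedAddCommGroup E] (x y : E) :
    1 + ‖x‖ ≤ (1 + ‖y‖) * (1 + ‖x - y‖) := by
  have := norm_add_le y (x - y)
  rw [add_sub_cancel] at this
  nlinarith [norm_nonneg y, norm_nonneg (x - y)]

theorem one_add_norm_rpow_le {E : Type*} [NormedAddCommGroup E] (x y : E) {M : ℝ} (hM : 0 ≤ M) :
    (1 + ‖y‖) ^ (-M) ≤ (1 + ‖x - y‖) ^ M * (1 + ‖x‖) ^ (-M) := by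
  rw [Real.rpow_neg (by positivity), Real.rpow_neg (by positivity), ← div_eq_mul_inv,
    le_div_iff₀ (by positivity), inv_mul_le_iff₀ (by positivity),
    ← Real.mul_rpow (by positivity) (by positivity)]
  exact Real.rpow_le_rpow (by positivity) (one_add_norm_le_mul x y) hM

theorem integrable_of_decay {n : ℕ} {K : Euc n → ℂ} (hK : Continuous K) {C M : ℝ}
    (hM : (n : ℝ) < M) (hb : ∀ y, ‖K y‖ ≤ C * (1 + ‖y‖) ^ (-M)) : Integrable K :=
  ((integrable_one_add_norm (μ := (volume : Measure (Euc n))) (r := M)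
    (by simpa using hM)).const_mul C).mono' hK.aestronglyMeasurable
    (Filter.Eventually.of_forall hb)

/-- Convolving a kernel of decay rate `M` with a Schwartz function gives a function all of whose
derivatives decay at rate `M`, since every derivative falls on the Schwartz factor. The target space
`F` is quantified after `j` because it changes in the induction. -/
theorem conv_decay {n : ℕ} {K : Euc n → ℂ} (hK : Continuous K) {C M : ℝ}
    (hM : (n : ℝ) < M) (hb : ∀ y, ‖K y‖ ≤ C * (1 + ‖y‖) ^ (-M)) (j : ℕ) :
    ∀ (F : Type) [NormedAddCommGroup F] [NormedSpace ℝ F] [NormedSpace ℂ F]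
      [SMulCommClass ℝ ℂ F] (Φ : 𝓢(Euc n, F)),
      ∃ C' : ℝ, 0 ≤ C' ∧ ∀ x,
        ‖iteratedFDeriv ℝ j (fun x => ∫ y, K y • Φ (x - y)) x‖ ≤ C' * (1 + ‖x‖) ^ (-M) := by
  have hM0 : 0 ≤ M := (Nat.cast_nonneg n).trans hM.le
  have hC : 0 ≤ C := by
    have := (norm_nonneg _).trans (hb 0)
    simpa using this
  have hKi := integrable_of_decay hK hM hb
  induction j with
  | zero =>
    intro F _ _ _ _ Φ
    obtain ⟨A, hA, hΦ⟩ := schwartz_rpow_decay Φ (M + (n + 1))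
    have hi := integrable_one_add_norm (μ := (volume : Measure (Euc n))) (r := (n:ℝ) + 1)
      (by simp)
    refine ⟨C * A * ∫ y : Euc n, (1 + ‖y‖) ^ (-((n:ℝ) + 1)), by positivity, fun x => ?_⟩
    rw [norm_iteratedFDeriv_zero]
    have hi' := (hi.comp_sub_left x).const_mul (C * A * (1 + ‖x‖) ^ (-M))
    refine (norm_integral_le_of_norm_le hi' (Filter.Eventually.of_forall fun y => ?_)).trans
      (le_of_eq ?_)
    · rw [norm_smul]
      calc ‖K y‖ * ‖Φ (x - y)‖ ≤ (C * ((1 + ‖x - y‖) ^ M * (1 + ‖x‖) ^ (-M))) *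
            (A * (1 + ‖x - y‖) ^ (-(M + (n + 1)))) := by
            gcongr
            · exact (hb y).trans (by gcongr; exact one_add_norm_rpow_le x y hM0)
            · exact hΦ _
        _ = _ := by
            have hp : 0 < 1 + ‖x - y‖ := by positivity
            rw [neg_add, Real.rpow_add hp, Real.rpow_neg hp.le M]
            have : 0 < (1 + ‖x - y‖) ^ M := by positivity
            field_simp
    · rw [integral_const_mul, integral_sub_left_eq_self
        (fun y : Euc n => (1 + ‖y‖) ^ (-((n:ℝ) + 1)))]
      ring
  | succ j ih =>
    intro F _ _ _ _ Φ
    set Φ' := SchwartzMap.fderivCLM ℝ (Euc n) F Φ with hΦ'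
    obtain ⟨C', hC', h⟩ := ih (Euc n →L[ℝ] F) Φ'
    refine ⟨C', hC', fun x => ?_⟩
    rw [← norm_iteratedFDeriv_fderiv]
    have hfd : fderiv ℝ (fun x => ∫ y, K y • Φ (x - y)) = fun x => ∫ y, K y • Φ' (x - y) := by
      ext1 x
      refine HasFDerivAt.fderiv ?_
      obtain ⟨A, hA, hA'⟩ := schwartz_rpow_decay Φ 0
      obtain ⟨B, hB, hB'⟩ := schwartz_rpow_decay Φ' 0
      simp only [neg_zero, Real.rpow_zero, mul_one] at hA' hB'
      have m1 : ∀ x, AEStronglyMeasurable (fun y => K y • Φ (x - y)) volume := fun x =>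
        (hK.smul (Φ.continuous.comp (by fun_prop))).aestronglyMeasurable
      have m2 : ∀ x, AEStronglyMeasurable (fun y => K y • Φ' (x - y)) volume := fun x =>
        (hK.smul (Φ'.continuous.comp (by fun_prop))).aestronglyMeasurable
      refine hasFDerivAt_integral_of_dominated_of_fderiv_le (bound := fun y => ‖K y‖ * B)
        (F := fun x y => K y • Φ (x - y)) (F' := fun x y => K y • Φ' (x - y)) (s := univ)
        Filter.univ_mem (Filter.Eventually.of_forall m1) ?_ (m2 x) ?_ (hKi.norm.mul_const B) ?_
      · refine (hKi.norm.mul_const A).mono' (m1 x) (Filter.Eventually.of_forall fun y => ?_)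
        rw [norm_smul]
        gcongr
        exact hA' _
      · refine Filter.Eventually.of_forall fun y x _ => ?_
        rw [norm_smul]
        gcongr
        exact hB' _
      · refine Filter.Eventually.of_forall fun y x _ => ?_
        have h1 : HasFDerivAt Φ (Φ' (x - y)) (x - y) := by
          have := (Φ.differentiableAt (x := x - y)).hasFDerivAt
          simpa [hΦ', SchwartzMap.fderivCLM_apply] using this
        have h2 : HasFDerivAt (fun x => Φ (x - y)) (Φ' (x - y)) x := by
          have := h1.comp x ((hasFDerivAt_id x).sub_const y)
          rw [ContinuousLinearMap.comp_id] at this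
          exact this
        exact h2.const_smul (K y)
    rw [hfd]
    exact h x

theorem brKernel_contDiff {n : ℕ} {δ : ℝ} (hδ : 0 < δ) :
    ContDiff ℝ ((⊤ : ℕ∞) : WithTop ℕ∞) (brKernel n δ) := by
  have e : brKernel n δ = 𝓕 (brMult n δ) := by
    rw [brKernel_eq, Real.fourierInv_eq_fourier_comp_neg]
    congr 1; ext ξ; simp [brMult]
  rw [e]
  refine Real.contDiff_fourier fun k _ => ?_
  refine Continuous.integrable_of_hasCompactSupport ?_ ?_
  · have := brMult_continuous (n := n) hδ
    fun_prop
  · exact (brMult_hasCompactSupport hδ).norm.mul_left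

/-- As the multiplier is supported in the unit ball, it is unchanged by multiplication with a smooth
cutoff, so the kernel reproduces itself under convolution with a Schwartz function. -/
theorem brKernel_reproducing {n : ℕ} {δ : ℝ} (hδ : 0 < δ) :
    ∃ Φ : 𝓢(Euc n, ℂ), ∀ x, brKernel n δ x = ∫ y, brKernel n δ y • Φ (x - y) := by
  have e : brKernel n δ = 𝓕 (brMult n δ) := by
    rw [brKernel_eq, Real.fourierInv_eq_fourier_comp_neg]
    congr 1; ext ξ; simp [brMult]
  let b : ContDiffBump (0 : Euc n) := ⟨1, 2, one_pos, by norm_num⟩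
  have hχs : HasCompactSupport (fun ξ => ((b ξ : ℝ) : ℂ)) :=
    b.hasCompactSupport.comp_left (g := Complex.ofReal) rfl
  have hχd : ContDiff ℝ ((⊤ : ℕ∞) : WithTop ℕ∞) (fun ξ => ((b ξ : ℝ) : ℂ)) :=
    Complex.ofRealCLM.contDiff.comp b.contDiff
  let χ : 𝓢(Euc n, ℂ) := hχs.toSchwartzMap hχd
  have hχ : ∀ ξ, brMult n δ ξ * χ ξ = brMult n δ ξ := by
    intro ξ
    rcases le_or_gt 1 ‖ξ‖ with h | h
    · simp [brMult_eq_zero hδ h]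
    · have : χ ξ = 1 := by
        change ((b ξ : ℝ) : ℂ) = 1
        rw [b.one_of_mem_closedBall (by simpa using h.le)]
        simp
      rw [this, mul_one]
  let Φ : 𝓢(Euc n, ℂ) := 𝓕 χ
  refine ⟨Φ, fun x => ?_⟩
  have hinv : ∀ ξ, 𝓕⁻ (⇑Φ) ξ = χ ξ := by
    intro ξ
    rw [← SchwartzMap.fourierInv_coe, FourierTransform.fourierInv_fourier_eq]
  have hg : Integrable (fun y => Φ (x - y)) := Φ.integrable.comp_sub_left x
  have flip := VectorFourier.integral_fourierIntegral_smul_eq_flip (μ := volume) (ν := volume)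
    (L := innerₗ (Euc n)) (e := 𝐞) (f := brMult n δ) (g := fun y => Φ (x - y))
    Real.continuous_fourierChar continuous_inner (brMult_integrable hδ) hg
  simp only [e]
  refine Eq.trans ?_ flip.symm
  rw [Real.fourier_eq]
  congr 1; ext ξ
  have h1 : VectorFourier.fourierIntegral 𝐞 volume (innerₗ (Euc n)).flip
      (fun y => Φ (x - y)) ξ = 𝐞 (-inner ℝ ξ x) • χ ξ := by
    rw [← hinv, Real.fourierInv_eq, VectorFourier.fourierIntegral,
      ← integral_sub_left_eq_self _ volume x, Circle.smul_def, ← integral_smul]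
    congr 1; ext y
    rw [sub_sub_cancel, ← Circle.smul_def, smul_smul, ← AddChar.map_add_eq_mul]
    congr 2
    simp [real_inner_comm]
    ring
  rw [h1]
  conv_lhs => rw [← hχ ξ]
  simp only [Circle.smul_def, smul_eq_mul]
  ring

theorem brKernel_iteratedFDeriv_decay {n : ℕ} (hn : 0 < n) {δ : ℝ} (hδ : 0 < δ)
    (hM : (n : ℝ) < δ + (n + 1) / 2) (j : ℕ) :
    ∃ C : ℝ, 0 ≤ C ∧ ∀ x, ‖iteratedFDeriv ℝ j (brKernel n δ) x‖ ≤
      C * (1 + ‖x‖) ^ (-(δ + (n + 1) / 2)) := by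
  obtain ⟨C, hC, hb⟩ := brKernel_decay hn hδ
  obtain ⟨Φ, hΦ⟩ := brKernel_reproducing (n := n) hδ
  have h := conv_decay (brKernel_contDiff hδ).continuous hM hb j ℂ Φ
  rwa [← funext hΦ] at h

/-! ### Localized pieces of the kernel as test functions -/

theorem pderiv_contDiff {n : ℕ} (i : Fin n) {g : Euc n → ℂ}
    (hg : ContDiff ℝ ((⊤ : ℕ∞) : WithTop ℕ∞) g) :
    ContDiff ℝ ((⊤ : ℕ∞) : WithTop ℕ∞) (pderiv' i g) :=
  (hg.fderiv_right (m := ((⊤ : ℕ∞) : WithTop ℕ∞)) (by simp)).clm_apply contDiff_const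

theorem norm_iteratedFDeriv_pderiv_le {n : ℕ} (i : Fin n) {g : Euc n → ℂ}
    (hg : ContDiff ℝ ((⊤ : ℕ∞) : WithTop ℕ∞) g) (j : ℕ) (x : Euc n) :
    ‖iteratedFDeriv ℝ j (pderiv' i g) x‖ ≤ ‖iteratedFDeriv ℝ (j + 1) g x‖ := by
  have h1 : pderiv' i g = (ContinuousLinearMap.apply ℝ ℂ
    (EuclideanSpace.single i (1:ℝ) : Euc n)) ∘ (fderiv ℝ g) := rfl
  have h2 : ContDiff ℝ ((⊤ : ℕ∞) : WithTop ℕ∞) (fderiv ℝ g) := hg.fderiv_right (by simp)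
  rw [h1, ← norm_iteratedFDeriv_fderiv]
  refine (ContinuousLinearMap.norm_iteratedFDeriv_comp_left _ h2.contDiffAt
    (by exact_mod_cast le_top)).trans ?_
  refine mul_le_of_le_one_left (norm_nonneg _) ?_
  refine ContinuousLinearMap.opNorm_le_bound _ zero_le_one fun T => ?_
  have := T.le_opNorm (EuclideanSpace.single i (1:ℝ) : Euc n)
  simpa using this

theorem norm_mderiv_le {n : ℕ} (α : Fin n → ℕ) {g : Euc n → ℂ}
    (hg : ContDiff ℝ ((⊤ : ℕ∞) : WithTop ℕ∞) g) (x : Euc n) :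
    ‖mderiv α g x‖ ≤ ‖iteratedFDeriv ℝ (∑ i, α i) g x‖ := by
  have iter : ∀ (i : Fin n) (a : ℕ) (h : Euc n → ℂ),
      ContDiff ℝ ((⊤ : ℕ∞) : WithTop ℕ∞) h →
      ContDiff ℝ ((⊤ : ℕ∞) : WithTop ℕ∞) ((pderiv' i)^[a] h) ∧ ∀ j,
        ‖iteratedFDeriv ℝ j ((pderiv' i)^[a] h) x‖ ≤ ‖iteratedFDeriv ℝ (j + a) h x‖ := by
    intro i a
    induction a with
    | zero => intro h hh; exact ⟨hh, fun j => le_rfl⟩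
    | succ a ih =>
      intro h hh
      obtain ⟨c, b⟩ := ih (pderiv' i h) (pderiv_contDiff i hh)
      refine ⟨c, fun j => (b j).trans ?_⟩
      exact norm_iteratedFDeriv_pderiv_le i hh (j + a) x
  have main : ∀ l : List (Fin n),
      ContDiff ℝ ((⊤ : ℕ∞) : WithTop ℕ∞)
        (((l.map fun i => (pderiv' i)^[α i]).foldr (· ∘ ·) id) g) ∧ ∀ j,
        ‖iteratedFDeriv ℝ j (((l.map fun i => (pderiv' i)^[α i]).foldr (· ∘ ·) id) g) x‖ ≤
          ‖iteratedFDeriv ℝ (j + (l.map α).sum) g x‖ := by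
    intro l
    induction l with
    | nil => exact ⟨hg, fun j => le_rfl⟩
    | cons i l ih =>
      obtain ⟨c, b⟩ := ih
      obtain ⟨c', b'⟩ := iter i (α i) _ c
      refine ⟨c', fun j => (b' j).trans ((b _).trans (le_of_eq ?_))⟩
      rw [List.map_cons, List.sum_cons, add_assoc]
  have h := (main (List.finRange n)).2 0
  have hs : ((List.finRange n).map α).sum = ∑ i, α i := by
    rw [← List.ofFn_eq_map, List.sum_ofFn]
  rw [norm_iteratedFDeriv_zero, zero_add, hs] at h
  exact h

/-- The one-dimensional profile of a smooth partition of unity by integer translates. -/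
def thetaBump (s : ℝ) : ℝ := Real.smoothTransition (s + 1) - Real.smoothTransition s

theorem thetaBump_eq_zero {s : ℝ} (h : 1 < |s|) : thetaBump s = 0 := by
  unfold thetaBump
  rcases lt_abs.1 h with h | h
  · rw [Real.smoothTransition.one_of_one_le (by linarith),
      Real.smoothTransition.one_of_one_le (by linarith), sub_self]
  · rw [Real.smoothTransition.zero_of_nonpos (by linarith),
      Real.smoothTransition.zero_of_nonpos (by linarith), sub_self]

/-- The tensor-product bump whose integer translates sum to one. -/
def etaBump {n : ℕ} (u : Euc n) : ℂ := ((∏ i, thetaBump (u i) : ℝ) : ℂ)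

theorem thetaBump_contDiff : ContDiff ℝ ((⊤ : ℕ∞) : WithTop ℕ∞) thetaBump :=
  (Real.smoothTransition.contDiff.comp (contDiff_id.add contDiff_const)).sub
    Real.smoothTransition.contDiff

theorem etaBump_contDiff {n : ℕ} : ContDiff ℝ ((⊤ : ℕ∞) : WithTop ℕ∞) (etaBump (n := n)) := by
  have h : ContDiff ℝ ((⊤ : ℕ∞) : WithTop ℕ∞) (fun u : Euc n => ∏ i, thetaBump (u i)) :=
    contDiff_prod fun i _ => thetaBump_contDiff.comp (by fun_prop)
  exact Complex.ofRealCLM.contDiff.comp h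

theorem norm_le_of_coord {n : ℕ} {u : Euc n} (h : ∀ i, |u i| ≤ 1) : ‖u‖ ≤ n := by
  have h2 : ‖u‖ ^ 2 ≤ (n:ℝ) ^ 2 := by
    rw [EuclideanSpace.real_norm_sq_eq]
    calc ∑ i, u i ^ 2 ≤ ∑ i : Fin n, (1:ℝ) :=
          Finset.sum_le_sum fun i _ => by
            rw [← sq_abs]; nlinarith [h i, abs_nonneg (u i)]
      _ = n := by simp
      _ ≤ (n:ℝ) ^ 2 := by
          have : n ≤ n ^ 2 := Nat.le_self_pow (by norm_num) n
          exact_mod_cast this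
  exact le_of_sq_le_sq h2 (Nat.cast_nonneg n) 

theorem etaBump_tsupport {n : ℕ} : tsupport (etaBump (n := n)) ⊆ Metric.closedBall 0 n := by
  refine closure_minimal (fun u hu => ?_) Metric.isClosed_closedBall
  rw [mem_closedBall_zero_iff]
  refine norm_le_of_coord fun i => ?_
  by_contra! h
  apply hu
  unfold etaBump
  rw [Finset.prod_eq_zero (Finset.mem_univ i) (thetaBump_eq_zero h)]
  simp

theorem etaBump_hasCompactSupport {n : ℕ} : HasCompactSupport (etaBump (n := n)) :=
  (isCompact_closedBall (0 : Euc n) (n:ℝ)).of_isClosed_subset (isClosed_tsupport _) etaBump_tsupport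

theorem etaBump_iteratedFDeriv_bound {n : ℕ} (j : ℕ) : ∃ B : ℝ, 0 ≤ B ∧ ∀ u : Euc n,
    ‖iteratedFDeriv ℝ j (etaBump (n := n)) u‖ ≤ B := by
  obtain ⟨B, hB⟩ := (etaBump_contDiff (n := n)).continuous_iteratedFDeriv (m := j)
    (by exact_mod_cast le_top) |>.bounded_above_of_compact_support
    ((etaBump_hasCompactSupport (n := n)).iteratedFDeriv j)
  exact ⟨B, (norm_nonneg _).trans (hB 0), hB⟩

theorem exists_uniform {X : Type*} (P : ℕ → X → ℝ) (W : X → ℝ) (hW : ∀ x, 0 ≤ W x)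
    (h : ∀ j, ∃ C : ℝ, 0 ≤ C ∧ ∀ x, P j x ≤ C * W x) (N : ℕ) :
    ∃ C : ℝ, 0 ≤ C ∧ ∀ j ≤ N, ∀ x, P j x ≤ C * W x := by
  choose C hC hb using h
  refine ⟨∑ j ∈ Finset.range (N + 1), C j, Finset.sum_nonneg fun j _ => hC j, fun j hj x => ?_⟩
  refine (hb j x).trans ?_
  gcongr
  · exact hW x
  · exact Finset.single_le_sum (f := C) (fun j _ => hC j) (Finset.mem_range.2 (by omega))

/-- Each localized piece of the kernel is, after recentring at any nearby point, a small multiple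
of a test function. -/
theorem piece_test {n : ℕ} (hn : 0 < n) {δ : ℝ} (hδ : 0 < δ)
    (hM : (n : ℝ) < δ + (n + 1) / 2) (N : ℕ) : ∃ A : ℝ, 0 < A ∧
    ∀ c w : Euc n, (∀ i, |w i - c i| ≤ 1) → ∃ φ : 𝓢(Euc n, ℂ), inTestClass N φ ∧
      ∀ v, etaBump (v + w - c) * brKernel n δ (v + w) =
        ((A * (1 + ‖w‖) ^ (-(δ + (n + 1) / 2)) : ℝ) : ℂ) * φ v := by
  set M := δ + ((n:ℝ) + 1) / 2 with hMdef
  have hM0 : 0 ≤ M := (Nat.cast_nonneg n).trans hM.le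
  obtain ⟨B, hB, hBb⟩ := exists_uniform (fun j u => ‖iteratedFDeriv ℝ j (etaBump (n := n)) u‖)
    (fun _ => 1) (fun _ => zero_le_one) (fun j => by simpa using etaBump_iteratedFDeriv_bound j) (N + 1)
  obtain ⟨C, hC, hCb⟩ := exists_uniform (fun j u => ‖iteratedFDeriv ℝ j (brKernel n δ) u‖)
    (fun x => (1 + ‖x‖) ^ (-M)) (fun _ => by positivity)
    (brKernel_iteratedFDeriv_decay hn hδ hM) (N + 1)
  simp only [mul_one] at hBb
  set A₀ := (1 + 2 * (n:ℝ)) ^ (N + n + 1) * (2 ^ (N + 1) * (B * (C * (1 + 2 * (n:ℝ)) ^ M)))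
  refine ⟨A₀ + 1, by positivity, fun c w hw => ?_⟩
  set κ : ℝ := (A₀ + 1) * (1 + ‖w‖) ^ (-M) with hκ
  have hκ0 : 0 < κ := by positivity
  have hwc : ‖w - c‖ ≤ n := norm_le_of_coord fun i => by simpa using hw i
  set ψ : Euc n → ℂ := fun v => etaBump (v + w - c) * brKernel n δ (v + w) with hψ
  have d1 : ContDiff ℝ ((⊤ : ℕ∞) : WithTop ℕ∞) (fun v : Euc n => etaBump (v + (w - c))) :=
    etaBump_contDiff.comp (by fun_prop)
  have d2 : ContDiff ℝ ((⊤ : ℕ∞) : WithTop ℕ∞) (fun v : Euc n => brKernel n δ (v + w)) :=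
    (brKernel_contDiff hδ).comp (by fun_prop)
  have hψ' : ψ = fun v => etaBump (v + (w - c)) * brKernel n δ (v + w) := by
    ext v; simp only [hψ, add_sub_assoc]
  have dψ : ContDiff ℝ ((⊤ : ℕ∞) : WithTop ℕ∞) ψ := by rw [hψ']; exact d1.mul d2
  have sψ : HasCompactSupport ψ := by
    rw [hψ']
    exact (etaBump_hasCompactSupport.comp_homeomorph (Homeomorph.addRight (w - c))).mul_right
  have bψ : ∀ j ≤ N + 1, ∀ v, (1 + ‖v‖) ^ (N + n + 1) * ‖iteratedFDeriv ℝ j ψ v‖ ≤ κ := by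
    intro j hj v
    have L := norm_iteratedFDeriv_mul_le d1 d2 v (n := j) (by exact_mod_cast le_top)
    simp only [iteratedFDeriv_comp_add_right] at L
    rw [← hψ'] at L
    rcases le_or_gt ‖v + (w - c)‖ n with hu | hu
    · have hv : ‖v‖ ≤ 2 * n := by
        have := norm_sub_le (v + (w - c)) (w - c)
        rw [add_sub_cancel_right] at this
        linarith
      have hKb : ∀ i ≤ N + 1, ‖iteratedFDeriv ℝ i (brKernel n δ) (v + w)‖ ≤
          C * (1 + 2 * (n:ℝ)) ^ M * (1 + ‖w‖) ^ (-M) := by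
        intro i hi
        have := one_add_norm_rpow_le w (v + w) hM0
        rw [sub_add_cancel_right, norm_neg] at this
        calc _ ≤ C * (1 + ‖v + w‖) ^ (-M) := hCb i hi _
          _ ≤ C * ((1 + ‖v‖) ^ M * (1 + ‖w‖) ^ (-M)) := by gcongr
          _ ≤ C * ((1 + 2 * (n:ℝ)) ^ M * (1 + ‖w‖) ^ (-M)) := by gcongr
          _ = _ := by ring
      have L2 : ‖iteratedFDeriv ℝ j ψ v‖ ≤
          2 ^ (N + 1) * (B * (C * (1 + 2 * (n:ℝ)) ^ M * (1 + ‖w‖) ^ (-M))) := by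
        refine L.trans ?_
        calc _ ≤ ∑ i ∈ Finset.range (j + 1), (j.choose i : ℝ) *
              (B * (C * (1 + 2 * (n:ℝ)) ^ M * (1 + ‖w‖) ^ (-M))) := by
              refine Finset.sum_le_sum fun i hi => ?_
              have hi' := Finset.mem_range.1 hi
              rw [mul_assoc]
              gcongr
              · exact hBb i (by omega) _
              · exact hKb _ (by omega)
          _ = 2 ^ j * (B * (C * (1 + 2 * (n:ℝ)) ^ M * (1 + ‖w‖) ^ (-M))) := by
              rw [← Finset.sum_mul]; congr 1; exact_mod_cast Nat.sum_range_choose j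
          _ ≤ _ := by gcongr; norm_num
      calc _ ≤ (1 + 2 * (n:ℝ)) ^ (N + n + 1) *
            (2 ^ (N + 1) * (B * (C * (1 + 2 * (n:ℝ)) ^ M * (1 + ‖w‖) ^ (-M)))) := by gcongr
        _ = A₀ * (1 + ‖w‖) ^ (-M) := by ring
        _ ≤ κ := by rw [hκ]; gcongr; linarith
    · have z : ∀ i, iteratedFDeriv ℝ i (etaBump (n := n)) (v + (w - c)) = 0 := by
        intro i
        by_contra h
        have h1 := support_iteratedFDeriv_subset (𝕜 := ℝ) i (Function.mem_support.2 h)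
        have := etaBump_tsupport h1
        rw [mem_closedBall_zero_iff] at this
        linarith
      simp only [z, norm_zero, mul_zero, zero_mul, Finset.sum_const_zero] at L
      rw [le_antisymm L (norm_nonneg _), mul_zero]
      exact hκ0.le
  have sψ' : HasCompactSupport (((κ⁻¹ : ℝ) : ℂ) • ψ) := sψ.smul_left (f := fun _ => ((κ⁻¹ : ℝ) : ℂ))
  have dψ' : ContDiff ℝ ((⊤ : ℕ∞) : WithTop ℕ∞) (((κ⁻¹ : ℝ) : ℂ) • ψ) :=
    contDiff_const.mul dψ
  refine ⟨sψ'.toSchwartzMap dψ', ?_, ?_⟩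
  · intro x α hα
    have h1 : ‖mderiv α (((κ⁻¹ : ℝ) : ℂ) • ψ) x‖ ≤ κ⁻¹ * ‖iteratedFDeriv ℝ (∑ i, α i) ψ x‖ := by
      refine (norm_mderiv_le α dψ' x).trans ?_
      rw [iteratedFDeriv_const_smul_apply (dψ.contDiffAt.of_le (by exact_mod_cast le_top)),
        norm_smul, Complex.norm_real, Real.norm_eq_abs, abs_of_pos (by positivity)]
    calc _ ≤ (1 + ‖x‖) ^ (N + n + 1) * (κ⁻¹ * ‖iteratedFDeriv ℝ (∑ i, α i) ψ x‖) := by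
          gcongr; exact h1
      _ = κ⁻¹ * ((1 + ‖x‖) ^ (N + n + 1) * ‖iteratedFDeriv ℝ (∑ i, α i) ψ x‖) := by ring
      _ ≤ κ⁻¹ * κ := by gcongr; exact bψ _ hα x
      _ = 1 := inv_mul_cancel₀ hκ0.ne'
  · intro v
    change ψ v = (κ : ℂ) * (((κ⁻¹ : ℝ) : ℂ) • ψ v)
    rw [smul_eq_mul, ← mul_assoc, ← Complex.ofReal_mul, mul_inv_cancel₀ hκ0.ne']
    simp

/-! ### Pointwise control of the means by averages -/

/-- A localized piece of the Bochner–Riesz mean at `x` is controlled by the grand maximal function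
at any point `z` of the corresponding cell. -/
theorem piece_bound {n : ℕ} (hn : 0 < n) {δ : ℝ} (hδ : 0 < δ)
    (hM : (n : ℝ) < δ + (n + 1) / 2) (N : ℕ) : ∃ A : ℝ, 0 < A ∧
    ∀ (f : Euc n → ℂ) (x : Euc n) (R : ℝ), 0 < R → ∀ c z : Euc n,
      (∀ i, |(R • (x - z)) i - c i| ≤ 1) →
      ‖∫ y, etaBump (R • (x - y) - c) * (dil (brKernel n δ) R⁻¹ (x - y) * f y)‖ₑ ≤
        ENNReal.ofReal (A * (1 + ‖R • (x - z)‖) ^ (-(δ + (n + 1) / 2))) * grandMax N f z := by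
  obtain ⟨A, hA, h⟩ := piece_test hn hδ hM N
  refine ⟨A, hA, fun f x R hR c z hc => ?_⟩
  obtain ⟨φ, hφ, hv⟩ := h c (R • (x - z)) hc
  set κ : ℝ := A * (1 + ‖R • (x - z)‖) ^ (-(δ + ((n:ℝ) + 1) / 2)) with hκ
  have hκ0 : 0 ≤ κ := by positivity
  have e : ∀ y, etaBump (R • (x - y) - c) * (dil (brKernel n δ) R⁻¹ (x - y) * f y) =
      (κ : ℂ) * (dil φ R⁻¹ (z - y) * f y) := by
    intro y
    have := hv (R • (z - y))
    have e1 : R • (z - y) + R • (x - z) = R • (x - y) := by rw [← smul_add]; congr 1; abel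
    rw [e1] at this
    simp only [dil, inv_inv, Complex.real_smul]
    linear_combination (((R⁻¹ ^ n)⁻¹ : ℝ) : ℂ) * f y * this
  simp only [e]
  rw [integral_const_mul, enorm_mul]
  gcongr
  · rw [← ofReal_norm]
    apply ENNReal.ofReal_le_ofReal
    simp [abs_of_nonneg hκ0]
  · exact le_iSup₂_of_le φ hφ (le_iSup₂_of_le R⁻¹ (inv_pos.2 hR) le_rfl)

/-- The partial sums of the partition of unity. -/
def partBump {n : ℕ} (L : ℕ) (u : Euc n) : ℂ :=
  ((∏ i, (Real.smoothTransition (u i + L + 1) - Real.smoothTransition (u i - L + 1)) : ℝ) : ℂ)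

/-- The corner of the lattice cell indexed by `m`, recentred by `L`. -/
def corner {n : ℕ} (L : ℕ) (m : Fin n → ℕ) : Euc n := WithLp.toLp 2 fun i => (m i : ℝ) - L

/-- The sum of the bumps over the lattice points of `[-L, L)ⁿ` telescopes in each coordinate. -/
theorem partBump_eq_sum {n : ℕ} (L : ℕ) (u : Euc n) :
    partBump L u = ∑ m ∈ Fintype.piFinset fun _ : Fin n => Finset.range (2 * L),
      etaBump (u - corner L m) := by
  have h1 : ∀ s : ℝ, Real.smoothTransition (s + L + 1) - Real.smoothTransition (s - L + 1) =
      ∑ k ∈ Finset.range (2 * L), thetaBump (s - ((k : ℝ) - L)) := by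
    intro s
    have := Finset.sum_range_sub' (fun k : ℕ => Real.smoothTransition (s + L + 1 - k)) (2 * L)
    simp only [Nat.cast_zero, sub_zero] at this
    have e : s + L + 1 - ((2 * L : ℕ) : ℝ) = s - L + 1 := by push_cast; ring
    rw [e] at this
    rw [← this]
    refine Finset.sum_congr rfl fun k _ => ?_
    unfold thetaBump
    congr 2 <;> push_cast <;> ring
  unfold partBump etaBump
  simp only [h1]
  rw [Finset.prod_univ_sum, Complex.ofReal_sum]
  rfl

theorem norm_partBump_le {n : ℕ} (L : ℕ) (u : Euc n) : ‖partBump L u‖ ≤ 1 := by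
  unfold partBump
  rw [Complex.norm_real, Real.norm_eq_abs, Finset.abs_prod]
  refine Finset.prod_le_one (fun _ _ => abs_nonneg _) fun i _ => ?_
  rw [abs_le]
  constructor <;> linarith [Real.smoothTransition.nonneg (u i + L + 1),
    Real.smoothTransition.nonneg (u i - L + 1), Real.smoothTransition.le_one (u i + L + 1),
    Real.smoothTransition.le_one (u i - L + 1)]

theorem partBump_eq_one {n : ℕ} {L : ℕ} {u : Euc n} (h : ‖u‖ + 1 ≤ L) : partBump L u = 1 := by
  unfold partBump
  rw [Finset.prod_eq_one, Complex.ofReal_one]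
  intro i _
  have h2 : |u i| ≤ ‖u‖ := by simpa using PiLp.norm_apply_le u i
  have h3 := abs_le.1 h2
  rw [Real.smoothTransition.one_of_one_le (by linarith),
    Real.smoothTransition.zero_of_nonpos (by linarith), sub_zero]

theorem partBump_continuous {n : ℕ} (L : ℕ) : Continuous (partBump (n := n) L) := by
  refine Complex.continuous_ofReal.comp (continuous_finsetProd _ fun i _ => ?_)
  exact (Real.smoothTransition.continuous.comp (by fun_prop)).sub
    (Real.smoothTransition.continuous.comp (by fun_prop))

theorem etaBump_norm_le {n : ℕ} (u : Euc n) : ‖etaBump u‖ ≤ 1 := by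
  unfold etaBump
  rw [Complex.norm_real, Real.norm_eq_abs, Finset.abs_prod]
  refine Finset.prod_le_one (fun _ _ => abs_nonneg _) fun i _ => ?_
  unfold thetaBump
  rw [abs_le]
  constructor <;> linarith [Real.smoothTransition.nonneg (u i + 1),
    Real.smoothTransition.nonneg (u i), Real.smoothTransition.le_one (u i + 1),
    Real.smoothTransition.le_one (u i)]

/-- The lattice cell `{z : R (x - z) ∈ c + [0,1)ⁿ}`. -/
def cell {n : ℕ} (x : Euc n) (R : ℝ) (c : Euc n) : Set (Euc n) :=
  {z | ∀ i, c i ≤ (R • (x - z)) i ∧ (R • (x - z)) i < c i + 1}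

theorem cell_measurable {n : ℕ} (x : Euc n) (R : ℝ) (c : Euc n) : MeasurableSet (cell x R c) := by
  unfold cell
  simp only [ofPred_forall, ofPred_and]
  refine MeasurableSet.iInter fun i => ?_
  exact (measurableSet_le (by fun_prop) (by fun_prop)).inter
    (measurableSet_lt (by fun_prop) (by fun_prop))

theorem cell_volume {n : ℕ} (x : Euc n) {R : ℝ} (hR : 0 < R) (c : Euc n) :
    volume (cell x R c) = ENNReal.ofReal (R⁻¹ ^ n) := by
  set Q : Set (Euc n) := {w | ∀ i, c i ≤ w i ∧ w i < c i + 1} with hQ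
  have hQm : MeasurableSet Q := by
    simp only [hQ, ofPred_forall, ofPred_and]
    refine MeasurableSet.iInter fun i => ?_
    exact (measurableSet_le (by fun_prop) (by fun_prop)).inter
      (measurableSet_lt (by fun_prop) (by fun_prop))
  have hQv : volume Q = 1 := by
    have e : Q = (WithLp.ofLp : Euc n → (Fin n → ℝ)) ⁻¹'
        (Set.pi univ fun i => Set.Ico (c i) (c i + 1)) := by
      ext w; simp [hQ]
    rw [e, (PiLp.volume_preserving_ofLp (Fin n)).measure_preimage
      (MeasurableSet.univ_pi fun i => measurableSet_Ico).nullMeasurableSet]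
    rw [Real.volume_pi_Ico]
    simp
  have e1 : cell x R c = (fun z => x - z) ⁻¹' ((fun z => R • z) ⁻¹' Q) := rfl
  rw [e1, (volume.measurePreserving_sub_left x).measure_preimage
    (hQm.preimage (by fun_prop)).nullMeasurableSet,
    Measure.addHaar_preimage_smul _ hR.ne', hQv, mul_one]
  simp [abs_of_pos hR]

theorem cell_disjoint {n : ℕ} (x : Euc n) (R : ℝ) (L : ℕ) :
    Pairwise (Function.onFun Disjoint fun m : Fin n → ℕ => cell x R (corner L m)) := by
  intro m m' hne
  rw [Function.onFun, Set.disjoint_left]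
  intro z h h'
  apply hne
  ext i
  have a := h i
  have b := h' i
  simp only [corner] at a b
  have h1 : (m i : ℝ) < m' i + 1 := by linarith
  have h2 : (m' i : ℝ) < m i + 1 := by linarith
  have h1' : m i < m' i + 1 := by exact_mod_cast h1
  have h2' : m' i < m i + 1 := by exact_mod_cast h2
  omega

theorem ennreal_sum_rpow_le {ι : Type*} (s : Finset ι) (a : ι → ℝ≥0∞) {r : ℝ} (hr : 0 < r)
    (hr1 : r ≤ 1) : (∑ i ∈ s, a i) ^ r ≤ ∑ i ∈ s, a i ^ r := by
  classical
  induction s using Finset.induction_on with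
  | empty => simp [ENNReal.zero_rpow_of_pos hr]
  | insert i s hi ih =>
    rw [Finset.sum_insert hi, Finset.sum_insert hi]
    exact (ENNReal.rpow_add_le_add_rpow _ _ hr.le hr1).trans (by gcongr)

/-- Pointwise control of the Bochner–Riesz means by an integral average of a power of the grand
maximal function. -/
theorem brOp_le_average {n : ℕ} (hn : 0 < n) {δ : ℝ} (hδ : 0 < δ)
    (hM : (n : ℝ) < δ + (n + 1) / 2) (N : ℕ) {r : ℝ} (hr : 0 < r) (hr1 : r ≤ 1) :
    ∃ A : ℝ, 0 < A ∧
    ∀ (f : Euc n → ℂ) (g : Euc n → ℝ≥0∞), (∀ z, grandMax N f z ^ r ≤ g z) →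
      ∀ (x : Euc n) (R : ℝ), 0 < R →
      ‖brOp n δ R f x‖ₑ ^ r ≤ ENNReal.ofReal (A ^ r) * (ENNReal.ofReal (R ^ n) *
        ∫⁻ z, ENNReal.ofReal ((1 + R * ‖x - z‖) ^ (-(r * (δ + (n + 1) / 2)))) * g z) := by
  obtain ⟨A, hA, hb⟩ := piece_bound hn hδ hM N
  refine ⟨A, hA, fun f g hg x R hR => ?_⟩
  set M := δ + ((n:ℝ) + 1) / 2 with hMdef
  set F : Euc n → ℂ := fun y => dil (brKernel n δ) R⁻¹ (x - y) * f y with hF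
  have hbr : brOp n δ R f x = ∫ y, F y := rfl
  rw [hbr]
  set I := ∫⁻ z, ENNReal.ofReal ((1 + R * ‖x - z‖) ^ (-(r * M))) * g z with hI
  by_cases hFint : Integrable F
  swap
  · rw [integral_undef hFint]; simp [ENNReal.zero_rpow_of_pos hr]
  -- each truncation of the partition of unity satisfies the bound; dominated convergence gives the rest
  have trunc : ∀ L : ℕ, ‖∫ y, partBump L (R • (x - y)) * F y‖ₑ ^ r ≤
      ENNReal.ofReal (A ^ r) * (ENNReal.ofReal (R ^ n) * I) := by
    intro L
    have e1 : ∫ y, partBump L (R • (x - y)) * F y =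
        ∑ m ∈ Fintype.piFinset fun _ : Fin n => Finset.range (2 * L),
          ∫ y, etaBump (R • (x - y) - corner L m) * F y := by
      simp only [partBump_eq_sum, Finset.sum_mul]
      refine integral_finsetSum _ fun m _ => ?_
      refine hFint.bdd_mul (c := 1) ?_ (Filter.Eventually.of_forall fun y => etaBump_norm_le _)
      exact (etaBump_contDiff.continuous.comp (by fun_prop)).aestronglyMeasurable
    have cellb : ∀ m : Fin n → ℕ, ‖∫ y, etaBump (R • (x - y) - corner L m) * F y‖ₑ ^ r ≤
        ENNReal.ofReal (A ^ r) * (ENNReal.ofReal (R ^ n) *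
          ∫⁻ z in cell x R (corner L m),
            ENNReal.ofReal ((1 + R * ‖x - z‖) ^ (-(r * M))) * g z) := by
      intro m
      set T := ‖∫ y, etaBump (R • (x - y) - corner L m) * F y‖ₑ ^ r with hT
      have pt : ∀ z ∈ cell x R (corner L m), T ≤ ENNReal.ofReal (A ^ r) *
          (ENNReal.ofReal ((1 + R * ‖x - z‖) ^ (-(r * M))) * g z) := by
        intro z hz
        have := hb f x R hR (corner L m) z fun i => by
          have := hz i
          rw [abs_le]; constructor <;> linarith
        calc T ≤ (ENNReal.ofReal (A * (1 + ‖R • (x - z)‖) ^ (-M)) * grandMax N f z) ^ r := by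
              rw [hT]; gcongr
          _ = ENNReal.ofReal (A ^ r) * (ENNReal.ofReal ((1 + R * ‖x - z‖) ^ (-(r * M))) *
              grandMax N f z ^ r) := by
              rw [ENNReal.mul_rpow_of_nonneg _ _ hr.le,
                ENNReal.ofReal_rpow_of_nonneg (by positivity) hr.le,
                Real.mul_rpow hA.le (by positivity), ← Real.rpow_mul (by positivity),
                ENNReal.ofReal_mul (by positivity), norm_smul, Real.norm_of_nonneg hR.le, mul_assoc]
              congr 4
              ring
          _ ≤ _ := by gcongr; exact hg z
      have hRR : ENNReal.ofReal (R ^ n) * ENNReal.ofReal (R⁻¹ ^ n) = 1 := by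
        rw [← ENNReal.ofReal_mul (by positivity), ← mul_pow, mul_inv_cancel₀ hR.ne']
        simp
      calc T = ENNReal.ofReal (R ^ n) * ∫⁻ _ in cell x R (corner L m), T := by
            rw [setLIntegral_const, cell_volume x hR, mul_comm T, ← mul_assoc, hRR, one_mul]
        _ ≤ ENNReal.ofReal (R ^ n) * ∫⁻ z in cell x R (corner L m), ENNReal.ofReal (A ^ r) *
              (ENNReal.ofReal ((1 + R * ‖x - z‖) ^ (-(r * M))) * g z) := by
            refine mul_le_mul_right ?_ _
            exact setLIntegral_mono' (cell_measurable _ _ _) pt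
        _ = _ := by
            rw [lintegral_const_mul' _ _ ENNReal.ofReal_ne_top]
            ring
    rw [e1]
    calc _ ≤ (∑ m ∈ Fintype.piFinset fun _ : Fin n => Finset.range (2 * L),
          ‖∫ y, etaBump (R • (x - y) - corner L m) * F y‖ₑ) ^ r := by
          gcongr; exact enorm_sum_le _ _
      _ ≤ ∑ m ∈ Fintype.piFinset fun _ : Fin n => Finset.range (2 * L),
          ‖∫ y, etaBump (R • (x - y) - corner L m) * F y‖ₑ ^ r := ennreal_sum_rpow_le _ _ hr hr1
      _ ≤ ∑ m ∈ Fintype.piFinset fun _ : Fin n => Finset.range (2 * L),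
          ENNReal.ofReal (A ^ r) * (ENNReal.ofReal (R ^ n) *
          ∫⁻ z in cell x R (corner L m),
            ENNReal.ofReal ((1 + R * ‖x - z‖) ^ (-(r * M))) * g z) :=
          Finset.sum_le_sum fun m _ => cellb m
      _ ≤ _ := by
          rw [← Finset.mul_sum, ← Finset.mul_sum]
          refine mul_le_mul_right (mul_le_mul_right ?_ _) _
          rw [← lintegral_biUnion_finset ((cell_disjoint x R L).set_pairwise _)
            fun m _ => cell_measurable _ _ _]
          exact setLIntegral_le_lintegral _ _
  have lim : Filter.Tendsto (fun L : ℕ => ∫ y, partBump L (R • (x - y)) * F y) Filter.atTop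
      (nhds (∫ y, F y)) := by
    refine tendsto_integral_of_dominated_convergence (fun y => ‖F y‖) (fun L => ?_) hFint.norm
      (fun L => Filter.Eventually.of_forall fun y => ?_) (Filter.Eventually.of_forall fun y => ?_)
    · exact (((partBump_continuous L).comp (by fun_prop)).aestronglyMeasurable).mul
        hFint.aestronglyMeasurable
    · rw [norm_mul]
      exact mul_le_of_le_one_left (norm_nonneg _) (norm_partBump_le _ _)
    · refine tendsto_const_nhds.congr' ?_
      filter_upwards [Filter.eventually_ge_atTop ⌈‖R • (x - y)‖ + 1⌉₊] with L hL
      rw [partBump_eq_one ((Nat.le_ceil _).trans (by exact_mod_cast hL)), one_mul]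
  have lim2 := ((ENNReal.continuous_rpow_const (y := r)).tendsto _).comp lim.enorm
  exact le_of_tendsto' lim2 trunc

/-! ### Averages, the maximal theorem and the weak Lebesgue majorant -/

theorem volume_closedBall_eq {n : ℕ} (x : Euc n) {ρ : ℝ} (hρ : 0 ≤ ρ) :
    volume (Metric.closedBall x ρ) =
      ENNReal.ofReal (ρ ^ n) * volume (Metric.ball (0 : Euc n) 1) := by
  rw [Measure.addHaar_closedBall _ x hρ]
  simp

/-- The points where the maximal average of `h` over centred closed balls exceeds one. -/
def badSet {n : ℕ} (h : Euc n → ℝ≥0∞) : Set (Euc n) :=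
  {x | ∃ ρ : ℝ, 0 < ρ ∧
    volume (Metric.closedBall x ρ) < ∫⁻ z in Metric.closedBall x ρ, h z}

/-- The weak type `(1,1)` inequality of the Hardy–Littlewood maximal theorem at height one. -/
theorem volume_badSet_le {n : ℕ} (hn : 0 < n) (h : Euc n → ℝ≥0∞) (hfin : ∫⁻ z, h z ≠ ⊤) :
    volume (badSet h) ≤ 5 ^ n * ∫⁻ z, h z := by
  set V := volume (Metric.ball (0 : Euc n) 1) with hV
  have hV0 : V ≠ 0 := (Metric.measure_ball_pos volume _ one_pos).ne'
  have hVt : V ≠ ⊤ := measure_ball_lt_top.ne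
  set t : Set (Euc n × ℝ) := {a | 0 < a.2 ∧
    volume (Metric.closedBall a.1 a.2) < ∫⁻ z in Metric.closedBall a.1 a.2, h z} with ht
  set K : ℝ := ((∫⁻ z, h z) / V).toReal with hK
  have hbound : ∀ a ∈ t, a.2 ≤ 1 + K := by
    rintro ⟨x, ρ⟩ ⟨hρ, hlt⟩
    simp only at hρ hlt ⊢
    rw [volume_closedBall_eq x hρ.le] at hlt
    have h1 : ENNReal.ofReal (ρ ^ n) ≤ (∫⁻ z, h z) / V :=
      (ENNReal.le_div_iff_mul_le (Or.inl hV0) (Or.inl hVt)).2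
        (hlt.le.trans (setLIntegral_le_lintegral _ _))
    have h2 : ρ ^ n ≤ K := (ENNReal.ofReal_le_iff_le_toReal (ENNReal.div_ne_top hfin hV0)).1 h1
    rcases le_total ρ 1 with h3 | h3
    · have : 0 ≤ K := ENNReal.toReal_nonneg
      linarith
    · have := le_self_pow₀ h3 hn.ne'
      linarith
  obtain ⟨u, hut, hud, hcov⟩ := Vitali.exists_disjoint_subfamily_covering_enlargement_closedBall
    t (fun a => a.1) (fun a => a.2) (1 + K) hbound 5 (by norm_num)
  have hcount : u.Countable := by
    have hd : u.PairwiseDisjoint fun a : Euc n × ℝ => Metric.ball a.1 a.2 :=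
      hud.mono fun a => Metric.ball_subset_closedBall
    exact hd.countable_of_isOpen (fun a _ => Metric.isOpen_ball)
      fun a ha => ⟨a.1, Metric.mem_ball_self (hut ha).1⟩
  have hsub : badSet h ⊆ ⋃ a ∈ u, Metric.closedBall a.1 (5 * a.2) := by
    rintro x ⟨ρ, hρ, hlt⟩
    obtain ⟨b, hb, hbs⟩ := hcov (x, ρ) ⟨hρ, hlt⟩
    exact mem_biUnion hb (hbs (Metric.mem_closedBall_self hρ.le))
  calc volume (badSet h) ≤ volume (⋃ a ∈ u, Metric.closedBall a.1 (5 * a.2)) := measure_mono hsub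
    _ ≤ ∑' a : u, volume (Metric.closedBall a.1.1 (5 * a.1.2)) := measure_biUnion_le _ hcount _
    _ ≤ ∑' a : u, 5 ^ n * ∫⁻ z in Metric.closedBall a.1.1 a.1.2, h z := by
        refine ENNReal.tsum_le_tsum fun a => ?_
        have ha := hut a.2
        have hρ := ha.1
        calc volume (Metric.closedBall a.1.1 (5 * a.1.2))
            = 5 ^ n * volume (Metric.closedBall a.1.1 a.1.2) := by
              rw [volume_closedBall_eq _ (by positivity), volume_closedBall_eq _ hρ.le, mul_pow,
                ENNReal.ofReal_mul (by positivity), ENNReal.ofReal_pow (by norm_num), mul_assoc]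
              simp
          _ ≤ _ := by gcongr; exact ha.2.le
    _ = 5 ^ n * ∫⁻ z in ⋃ a ∈ u, Metric.closedBall a.1 a.2, h z := by
        rw [ENNReal.tsum_mul_left,
          lintegral_biUnion hcount (fun a _ => Metric.isClosed_closedBall.measurableSet) hud]
    _ ≤ _ := mul_le_mul_right (setLIntegral_le_lintegral _ _) _

/-- Domination of a power by a dyadic superposition of indicators of balls. -/
theorem decay_le_tsum {n : ℕ} {s : ℝ} (hs : 0 < s) (x z : Euc n) {R : ℝ} (hR : 0 < R) :
    ENNReal.ofReal ((1 + R * ‖x - z‖) ^ (-s)) ≤ ∑' k : ℕ, ENNReal.ofReal ((2:ℝ) ^ (-s)) ^ k *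
      (Metric.closedBall x (2 ^ (k + 1) / R)).indicator 1 z := by
  obtain ⟨k, hk1, hk2⟩ := exists_nat_pow_near (x := 1 + R * ‖x - z‖) (y := 2)
    (by have : 0 ≤ R * ‖x - z‖ := by positivity
        linarith) (by norm_num)
  have hz : z ∈ Metric.closedBall x (2 ^ (k + 1) / R) := by
    rw [Metric.mem_closedBall, dist_comm, dist_eq_norm, le_div_iff₀ hR]
    linarith
  refine le_trans ?_ (ENNReal.le_tsum k)
  rw [indicator_of_mem hz, Pi.one_apply, mul_one, ← ENNReal.ofReal_pow (by positivity)]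
  apply ENNReal.ofReal_le_ofReal
  rw [← Real.rpow_natCast ((2:ℝ) ^ (-s)), ← Real.rpow_mul (by norm_num), mul_comm (-s),
    Real.rpow_mul (by norm_num), Real.rpow_natCast]
  exact Real.rpow_le_rpow_of_nonpos (by positivity) hk1 (by linarith)

/-- At a point where all averages of `h` are at most one, every weighted average of `1 + h` against
a dilate of an integrable radially decreasing power is bounded. -/
theorem average_bound {n : ℕ} {s : ℝ} (hs : (n : ℝ) < s) : ∃ C : ℝ≥0∞, C ≠ ⊤ ∧
    ∀ (h : Euc n → ℝ≥0∞), Measurable h → ∀ x ∉ badSet h, ∀ R : ℝ, 0 < R →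
      ENNReal.ofReal (R ^ n) * ∫⁻ z, ENNReal.ofReal ((1 + R * ‖x - z‖) ^ (-s)) * (1 + h z) ≤ C := by
  have hs0 : 0 < s := (Nat.cast_nonneg n).trans_lt hs
  set V := volume (Metric.ball (0 : Euc n) 1) with hV
  have hVt : V ≠ ⊤ := measure_ball_lt_top.ne
  set q := ENNReal.ofReal ((2:ℝ) ^ (-s)) with hq
  refine ⟨∑' k : ℕ, (2 * 2 ^ n * V) * ENNReal.ofReal ((2:ℝ) ^ ((n:ℝ) - s)) ^ k, ?_, ?_⟩
  · rw [ENNReal.tsum_mul_left, ENNReal.tsum_geometric]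
    refine ENNReal.mul_ne_top (ENNReal.mul_ne_top (by simp [ENNReal.mul_eq_top]) hVt) ?_
    rw [ENNReal.inv_ne_top]
    refine (tsub_pos_of_lt ?_).ne'
    rw [ENNReal.ofReal_lt_one]
    exact Real.rpow_lt_one_of_one_lt_of_neg (by norm_num) (by linarith)
  · intro h hh x hx R hR
    have hgood : ∀ ρ : ℝ, 0 < ρ →
        ∫⁻ z in Metric.closedBall x ρ, h z ≤ volume (Metric.closedBall x ρ) := by
      intro ρ hρ
      by_contra! hlt
      exact hx ⟨ρ, hρ, hlt⟩
    calc _ ≤ ENNReal.ofReal (R ^ n) * ∫⁻ z, ∑' k : ℕ,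
          q ^ k * (Metric.closedBall x (2 ^ (k + 1) / R)).indicator (fun z => 1 + h z) z := by
          refine mul_le_mul_right (lintegral_mono fun z => ?_) _
          refine (mul_le_mul_left (decay_le_tsum hs0 x z hR) _).trans (le_of_eq ?_)
          rw [← ENNReal.tsum_mul_right]
          refine tsum_congr fun k => ?_
          rw [mul_assoc]
          congr 1
          by_cases hz : z ∈ Metric.closedBall x (2 ^ (k + 1) / R) <;> simp [hz]
      _ = ENNReal.ofReal (R ^ n) * ∑' k : ℕ,
          q ^ k * ∫⁻ z in Metric.closedBall x (2 ^ (k + 1) / R), (1 + h z) := by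
          have hm : ∀ k : ℕ, Measurable
              ((Metric.closedBall x (2 ^ (k + 1) / R)).indicator (fun z => 1 + h z)) := fun k =>
            (measurable_const.add hh).indicator Metric.isClosed_closedBall.measurableSet
          rw [lintegral_tsum fun k => ((hm k).const_mul _).aemeasurable]
          congr 1
          refine tsum_congr fun k => ?_
          rw [lintegral_const_mul _ (hm k),
            lintegral_indicator Metric.isClosed_closedBall.measurableSet]
      _ ≤ ENNReal.ofReal (R ^ n) * ∑' k : ℕ,
          q ^ k * (2 * (ENNReal.ofReal ((2 ^ (k + 1) / R) ^ n) * V)) := by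
          refine mul_le_mul_right (ENNReal.tsum_le_tsum fun k => mul_le_mul_right ?_ _) _
          rw [lintegral_add_left measurable_const, setLIntegral_const, one_mul, two_mul,
            ← volume_closedBall_eq x (by positivity)]
          gcongr
          exact hgood _ (by positivity)
      _ = _ := by
          rw [← ENNReal.tsum_mul_left]
          refine tsum_congr fun k => ?_
          have e : ENNReal.ofReal (R ^ n) * (q ^ k * ENNReal.ofReal ((2 ^ (k + 1) / R) ^ n)) =
              2 ^ n * ENNReal.ofReal ((2:ℝ) ^ ((n:ℝ) - s)) ^ k := by
            rw [hq, ← ENNReal.ofReal_pow (by positivity), ← ENNReal.ofReal_pow (by positivity),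
              ← ENNReal.ofReal_mul (by positivity), ← ENNReal.ofReal_mul (by positivity),
              show (2:ℝ≥0∞) = ENNReal.ofReal 2 by simp,
              ← ENNReal.ofReal_pow (by positivity), ← ENNReal.ofReal_mul (by positivity)]
            congr 1
            rw [sub_eq_add_neg, Real.rpow_add (by norm_num), Real.rpow_natCast, div_pow, mul_pow]
            field_simp
            ring
          calc _ = (ENNReal.ofReal (R ^ n) * (q ^ k * ENNReal.ofReal ((2 ^ (k + 1) / R) ^ n)))
                * (2 * V) := by ring
            _ = _ := by rw [e]; ring

theorem volume_superlevel_le {n : ℕ} {p : ℝ} (hp : 0 < p) (g : Euc n → ℝ≥0∞) {lam : ℝ≥0}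
    (hl : 0 < lam) :
    volume {x | (lam : ℝ≥0∞) < g x} ≤ (weakNorm volume p g / lam) ^ p := by
  have h : (lam : ℝ≥0∞) * volume {x | (lam : ℝ≥0∞) < g x} ^ (1 / p) ≤ weakNorm volume p g :=
    le_iSup₂_of_le lam hl le_rfl
  rw [mul_comm, ← ENNReal.le_div_iff_mul_le (Or.inl (by exact_mod_cast hl.ne'))
    (Or.inl ENNReal.coe_ne_top)] at h
  have h2 := ENNReal.rpow_le_rpow h hp.le
  rwa [← ENNReal.rpow_mul, one_div, inv_mul_cancel₀ hp.ne', ENNReal.rpow_one] at h2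

/-- For `g` in weak `L^p` and `r < p`, the power `(g/λ)^r` is at most a constant times `1 + h`, where
`h` is the sum of `2^(kr)` over the dyadic superlevel sets `{g > 2^k λ}` and is integrable. These sets
are replaced by measurable hulls because `g` need not be measurable. -/
theorem exists_majorant {n : ℕ} {p r : ℝ} (hr : 0 < r) (hrp : r < p) : ∃ S : ℝ≥0∞, S ≠ ⊤ ∧
    ∀ (g : Euc n → ℝ≥0∞) (lam : ℝ≥0), 0 < lam → ∃ h : Euc n → ℝ≥0∞, Measurable h ∧
      (∀ z, g z ^ r ≤ (4 * (lam : ℝ≥0∞)) ^ r * (1 + h z)) ∧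
      ∫⁻ z, h z ≤ S * (weakNorm volume p g / lam) ^ p := by
  have hp : 0 < p := hr.trans hrp
  refine ⟨∑' k : ℕ, ((2:ℝ≥0∞) ^ (r - p)) ^ k, ?_, fun g lam hl => ?_⟩
  · rw [ENNReal.tsum_geometric, ENNReal.inv_ne_top]
    refine (tsub_pos_of_lt ?_).ne'
    exact ENNReal.rpow_lt_one_of_one_lt_of_neg (by norm_num) (by linarith)
  set E : ℕ → Set (Euc n) := fun k =>
    toMeasurable volume {z | ((2 ^ k * lam : ℝ≥0) : ℝ≥0∞) < g z} with hE
  have hEm : ∀ k, MeasurableSet (E k) := fun k => measurableSet_toMeasurable _ _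
  have hEs : ∀ k z, ((2 ^ k * lam : ℝ≥0) : ℝ≥0∞) < g z → z ∈ E k := fun k z hz =>
    subset_toMeasurable _ _ hz
  set W := weakNorm volume p g with hW
  have hEv : ∀ k, volume (E k) ≤ ((2:ℝ≥0∞) ^ (-p)) ^ k * (W / lam) ^ p := by
    intro k
    rw [hE, measure_toMeasurable]
    refine (volume_superlevel_le hp g (by positivity)).trans (le_of_eq ?_)
    rw [ENNReal.coe_mul, ENNReal.coe_pow, div_eq_mul_inv,
      ENNReal.mul_inv (Or.inl (by simp)) (Or.inl (by simp)), mul_left_comm, ← div_eq_mul_inv,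
      ENNReal.mul_rpow_of_nonneg _ _ hp.le]
    congr 1
    rw [← ENNReal.rpow_natCast, ← ENNReal.rpow_natCast, ← ENNReal.rpow_neg, ← ENNReal.rpow_mul,
      ← ENNReal.rpow_mul]
    congr 1
    ring
  have hm : ∀ k : ℕ, Measurable fun z => ((2:ℝ≥0∞) ^ r) ^ k * (E k).indicator 1 z := fun k =>
    (measurable_one.indicator (hEm k)).const_mul _
  refine ⟨fun z => ∑' k : ℕ, ((2:ℝ≥0∞) ^ r) ^ k * (E k).indicator 1 z,
    Measurable.tsum hm, fun z => ?_, ?_⟩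
  · have hl0 : (lam : ℝ≥0∞) ≠ 0 := by exact_mod_cast hl.ne'
    rcases le_or_gt (g z) (2 * lam) with h1 | h1
    · calc g z ^ r ≤ (4 * (lam : ℝ≥0∞)) ^ r * 1 := by
            rw [mul_one]
            refine ENNReal.rpow_le_rpow (h1.trans ?_) hr.le
            gcongr
            norm_num
        _ ≤ _ := by gcongr; exact le_self_add
    · rcases eq_or_ne (g z) ⊤ with h2 | h2
      · have : ∑' k : ℕ, ((2:ℝ≥0∞) ^ r) ^ k * (E k).indicator (1 : Euc n → ℝ≥0∞) z = ⊤ := by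
          have e : ∀ k, z ∈ E k := fun k => hEs k z (by rw [h2]; exact ENNReal.coe_lt_top)
          rw [eq_top_iff]
          calc (⊤ : ℝ≥0∞) = ∑' _ : ℕ, (1 : ℝ≥0∞) := by
                rw [ENNReal.tsum_const_eq_top_of_ne_zero one_ne_zero]
            _ ≤ _ := by
                refine ENNReal.tsum_le_tsum fun k => ?_
                rw [indicator_of_mem (e k), Pi.one_apply, mul_one]
                exact one_le_pow₀ (ENNReal.one_le_rpow (by norm_num) hr)
        simp only [this]
        rw [add_top, ENNReal.mul_top]
        · exact le_top
        · rw [ne_eq, ENNReal.rpow_eq_zero_iff]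
          simp [hl0, not_lt.2 hr.le]
      · lift g z to ℝ≥0 using h2 with y hy
        have h1' : 2 * lam < y := by exact_mod_cast h1
        obtain ⟨k, hk1, hk2⟩ := exists_nat_pow_near (x := y / (2 * lam)) (y := 2)
          ((one_le_div₀ (by positivity)).2 h1'.le) (by norm_num)
        rw [le_div_iff₀ (by positivity)] at hk1
        rw [div_lt_iff₀ (by positivity)] at hk2
        have hz : z ∈ E k := by
          apply hEs
          rw [← hy]
          have : 2 ^ k * lam < y := by
            have : 0 < 2 ^ k * lam := by positivity
            calc 2 ^ k * lam < 2 ^ k * lam + 2 ^ k * lam := lt_add_of_pos_right _ this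
              _ = 2 ^ k * (2 * lam) := by ring
              _ ≤ y := hk1
          exact_mod_cast this
        calc (y : ℝ≥0∞) ^ r ≤ (4 * (lam : ℝ≥0∞) * 2 ^ k) ^ r := by
              refine ENNReal.rpow_le_rpow ?_ hr.le
              have : y ≤ 4 * lam * 2 ^ k := hk2.le.trans (le_of_eq (by ring))
              exact_mod_cast this
          _ = (4 * (lam : ℝ≥0∞)) ^ r * (((2:ℝ≥0∞) ^ r) ^ k * (E k).indicator 1 z) := by
              rw [indicator_of_mem hz, Pi.one_apply, mul_one,
                ENNReal.mul_rpow_of_nonneg _ _ hr.le]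
              congr 1
              rw [← ENNReal.rpow_natCast, ← ENNReal.rpow_natCast, ← ENNReal.rpow_mul,
                ← ENNReal.rpow_mul, mul_comm]
          _ ≤ _ := by
              gcongr
              exact (ENNReal.le_tsum (f := fun k : ℕ => ((2:ℝ≥0∞) ^ r) ^ k *
                (E k).indicator (1 : Euc n → ℝ≥0∞) z) k).trans le_add_self
  · rw [lintegral_tsum fun k => (hm k).aemeasurable, ← ENNReal.tsum_mul_right]
    refine ENNReal.tsum_le_tsum fun k => ?_
    rw [lintegral_const_mul _ (measurable_one.indicator (hEm k)), lintegral_indicator_one (hEm k)]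
    refine (mul_le_mul_right (hEv k) _).trans (le_of_eq ?_)
    rw [← mul_assoc, ← mul_pow, ← ENNReal.rpow_add _ _ (by norm_num) (by norm_num), sub_eq_add_neg]

/-! ### Assembly -/

/-- The theorem in positive dimension, with the order `N` of the test class arbitrary. -/
theorem maxBR_weak_pos {n : ℕ} (hn : 0 < n) {p δ : ℝ} (hp0 : 0 < p) (hp1 : p ≤ 1)
    (hδ : (n : ℝ) / p - ((n : ℝ) + 1) / 2 < δ) (N : ℕ) :
    ∃ C : ℝ≥0, 0 < C ∧ ∀ f : Euc n → ℂ, whNorm N volume p f ≠ ⊤ →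
      weakNorm volume p (maxBR n δ f) ≤ (C : ℝ≥0∞) * whNorm N volume p f := by
  have hn1 : (1:ℝ) ≤ n := by exact_mod_cast hn
  have hnp : (n:ℝ) ≤ n / p := by
    rw [le_div_iff₀ hp0]; nlinarith
  have hδ0 : 0 < δ := by linarith
  have hM : (n : ℝ) < δ + (n + 1) / 2 := by linarith
  set M := δ + ((n:ℝ) + 1) / 2 with hMdef
  have hM0 : 0 < M := by linarith
  have hMp : n / M < p := by
    rw [div_lt_iff₀ hM0, mul_comm, ← div_lt_iff₀ hp0]; linarith
  obtain ⟨r, hr1, hr2⟩ := exists_between hMp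
  have hr : 0 < r := lt_of_le_of_lt (by positivity) hr1
  have hs : (n:ℝ) < r * M := by rwa [div_lt_iff₀ hM0] at hr1
  obtain ⟨A, hA, hav⟩ := brOp_le_average hn hδ0 hM N hr (hr2.le.trans hp1)
  obtain ⟨C, hC, hCb⟩ := average_bound hs
  obtain ⟨S, hS, hmaj⟩ := exists_majorant (n := n) hr hr2
  set B : ℝ≥0 := ((ENNReal.ofReal (A ^ r) * C) ^ (1 / r) * 4).toNNReal + 1 with hB
  have hBt : (ENNReal.ofReal (A ^ r) * C) ^ (1 / r) * 4 ≠ ⊤ :=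
    ENNReal.mul_ne_top (ENNReal.rpow_ne_top_of_nonneg (by positivity)
      (ENNReal.mul_ne_top ENNReal.ofReal_ne_top hC)) (by norm_num)
  have hB0 : 0 < B := by positivity
  have hBB : (ENNReal.ofReal (A ^ r) * C) ^ (1 / r) * 4 ≤ B := by
    rw [hB, ENNReal.coe_add, ENNReal.coe_toNNReal hBt]; exact le_self_add
  set D : ℝ≥0∞ := (5 ^ n * S) ^ (1 / p) * B with hD
  have hDt : D ≠ ⊤ := ENNReal.mul_ne_top (ENNReal.rpow_ne_top_of_nonneg (by positivity)
    (ENNReal.mul_ne_top (by simp) hS)) ENNReal.coe_ne_top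
  refine ⟨D.toNNReal + 1, by positivity, fun f hf => ?_⟩
  set W := whNorm N volume p f with hW
  refine le_trans ?_ (mul_le_mul_left (?_ : D ≤ _) W)
  swap
  · rw [ENNReal.coe_add, ENNReal.coe_toNNReal hDt]; exact le_self_add
  refine iSup₂_le fun lam hl => ?_
  -- work at the height `μ` for which the good-point bound `B μ` equals `lam`
  set μ : ℝ≥0 := lam / B with hμ
  have hμ0 : 0 < μ := by positivity
  have hμB : B * μ = lam := mul_div_cancel₀ _ hB0.ne'
  obtain ⟨h, hhm, hh1, hh2⟩ := hmaj (grandMax N f) μ hμ0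
  have hWμ : W / μ ≠ ⊤ := ENNReal.div_ne_top hf (by exact_mod_cast hμ0.ne')
  have hhfin : ∫⁻ z, h z ≠ ⊤ := ne_top_of_le_ne_top
    (ENNReal.mul_ne_top hS (ENNReal.rpow_ne_top_of_nonneg hp0.le hWμ)) hh2
  have hsub : {x | (lam : ℝ≥0∞) < maxBR n δ f x} ⊆ badSet h := by
    intro x hx
    by_contra hxb
    refine (not_lt.2 (iSup₂_le fun R hR => ?_)) (mem_ofPred.1 hx)
    have h1 := hav f _ hh1 x R hR
    have e : ∫⁻ z, ENNReal.ofReal ((1 + R * ‖x - z‖) ^ (-(r * M))) *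
        ((4 * (μ : ℝ≥0∞)) ^ r * (1 + h z)) = (4 * (μ : ℝ≥0∞)) ^ r *
        ∫⁻ z, ENNReal.ofReal ((1 + R * ‖x - z‖) ^ (-(r * M))) * (1 + h z) := by
      rw [← lintegral_const_mul' _ _ (ENNReal.rpow_ne_top_of_nonneg hr.le
        (ENNReal.mul_ne_top (by norm_num) ENNReal.coe_ne_top))]
      refine lintegral_congr fun z => ?_
      ring
    rw [e] at h1
    have h2 : ‖brOp n δ R f x‖ₑ ^ r ≤
        (ENNReal.ofReal (A ^ r) * C) * (4 * (μ : ℝ≥0∞)) ^ r := by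
      refine h1.trans ?_
      calc _ = ENNReal.ofReal (A ^ r) * (4 * (μ : ℝ≥0∞)) ^ r * (ENNReal.ofReal (R ^ n) *
            ∫⁻ z, ENNReal.ofReal ((1 + R * ‖x - z‖) ^ (-(r * M))) * (1 + h z)) := by ring
        _ ≤ ENNReal.ofReal (A ^ r) * (4 * (μ : ℝ≥0∞)) ^ r * C := by
            gcongr; exact hCb h hhm x hxb R hR
        _ = _ := by ring
    have h3 := ENNReal.rpow_le_rpow h2 (one_div_nonneg.2 hr.le)
    rw [← ENNReal.rpow_mul, ENNReal.mul_rpow_of_nonneg _ _ (one_div_nonneg.2 hr.le),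
      ← ENNReal.rpow_mul, mul_one_div_cancel hr.ne', ENNReal.rpow_one, ENNReal.rpow_one,
      ← mul_assoc] at h3
    calc _ ≤ _ := h3
      _ ≤ (B : ℝ≥0∞) * μ := by gcongr
      _ = lam := by rw [← ENNReal.coe_mul, hμB]
  have hvol : volume {x | (lam : ℝ≥0∞) < maxBR n δ f x} ≤ 5 ^ n * S * (W / μ) ^ p := by
    refine (measure_mono hsub).trans ((volume_badSet_le hn h hhfin).trans ?_)
    rw [mul_assoc]
    gcongr
    exact hh2
  calc (lam : ℝ≥0∞) * volume {x | (lam : ℝ≥0∞) < maxBR n δ f x} ^ (1 / p)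
      ≤ lam * (5 ^ n * S * (W / μ) ^ p) ^ (1 / p) := by gcongr
    _ = lam * ((5 ^ n * S) ^ (1 / p) * (W / μ)) := by
        rw [ENNReal.mul_rpow_of_nonneg _ _ (one_div_nonneg.2 hp0.le), ← ENNReal.rpow_mul,
          mul_one_div_cancel hp0.ne', ENNReal.rpow_one]
    _ = (5 ^ n * S) ^ (1 / p) * B * (μ * (W / μ)) := by
        rw [← hμB, ENNReal.coe_mul]; ring
    _ = D * W := by
        rw [ENNReal.mul_div_cancel (by exact_mod_cast hμ0.ne') ENNReal.coe_ne_top]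

/-- In dimension zero the space is a point, the kernel is `1`, and the constant `1` is an admissible
test function. -/
theorem maxBR_le_grandMax_zero (δ : ℝ) (N : ℕ) (f : Euc 0 → ℂ) (x : Euc 0) :
    maxBR 0 δ f x ≤ grandMax N f x := by
  have hK : ∀ y, brKernel 0 δ y = 1 := by
    intro y
    unfold brKernel
    rw [Real.fourierInv_eq, volume_euclideanSpace_eq_dirac, integral_dirac]
    simp
  have hcs : HasCompactSupport (fun _ : Euc 0 => (1:ℂ)) :=
    HasCompactSupport.of_compactSpace _
  set φ : 𝓢(Euc 0, ℂ) := hcs.toSchwartzMap contDiff_const with hφ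
  have hφ1 : ∀ y, φ y = 1 := fun y => rfl
  refine iSup₂_le fun R hR => ?_
  have ht : inTestClass N φ := by
    intro y α _
    have e : mderiv α (⇑φ) y = φ y := rfl
    have hy : y = 0 := Subsingleton.elim _ _
    rw [e, hφ1, hy]
    simp
  refine le_iSup₂_of_le φ ht (le_iSup₂_of_le R⁻¹ (inv_pos.2 hR) (le_of_eq ?_))
  simp only [brOp, dil, hK, hφ1]

/-- Let `0 < p ≤ 1` and `δ > n/p - (n+1)/2`. Then there is a constant
`C > 0`, independent of `f`, such that for every `f ∈ WH^p(ℝⁿ)` one has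
`‖T^δ_* f‖_{WL^p} ≤ C ‖f‖_{WH^p}` (with respect to Lebesgue measure). -/
theorem maxBochnerRiesz_weakHardy_to_weakLp (n : ℕ) (p δ : ℝ)
    (hp0 : 0 < p) (hp1 : p ≤ 1)
    (hδ : (n : ℝ) / p - ((n : ℝ) + 1) / 2 < δ) :
    ∃ C : ℝ≥0, 0 < C ∧ ∀ f : Euc n → ℂ,
      whNorm (⌊(n : ℝ) * (1 / p - 1)⌋.toNat) volume p f ≠ ⊤ →
      weakNorm volume p (maxBR n δ f) ≤
        (C : ℝ≥0∞) * whNorm (⌊(n : ℝ) * (1 / p - 1)⌋.toNat) volume p f := by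
  rcases Nat.eq_zero_or_pos n with rfl | hn
  · refine ⟨1, one_pos, fun f _ => ?_⟩
    rw [ENNReal.coe_one, one_mul]
    refine iSup₂_mono fun lam _ => ?_
    gcongr with x
    exact maxBR_le_grandMax_zero δ _ f x
  · exact maxBR_weak_pos hn hp0 hp1 hδ _
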